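/- arXiv:2512.06984 — 2 statements merged into one kernel-verified Lean document; each statement's English description precedes it below -/
import Mathlib

section
/- Let H ∈ (0,1), let W^H be the law of fractional Brownian motion with Hurst parameter H, and let W be the Wiener measure on Ω. Then for W^H-almost every ω̄ ∈ Ω, the local order of W at ω̄ (for the uniform norm) exists and is given by: ord_loc W(ω̄) = 2(H^{−1} − 1) if 0 < H < 1/2, and ord_loc W(ω̄) = 2 if 1/2 ≤ H < 1. -/
open scoped ENNReal NNReal Topology
open Filter MeasureTheory Metric Set

noncomputable section

namespace Multifractal


/-- The `δ`-level Hausdorff pre-measure `H^h_δ` associated to a gauge `h`. -/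
def hMeasAux {X : Type*} [MetricSpace X] (h : ℝ → ℝ) (δ : ℝ≥0∞) (E : Set X) : ℝ≥0∞ :=
  ⨅ (c : ℕ → X) (r : ℕ → ℝ) (_ : ∀ n, 0 < r n ∧ ENNReal.ofReal (r n) ≤ δ)
    (_ : E ⊆ ⋃ n, Metric.ball (c n) (r n)), ∑' n, ENNReal.ofReal (h (r n))

/-- The `h`-Hausdorff measure. -/
def hMeas {X : Type*} [MetricSpace X] (h : ℝ → ℝ) (E : Set X) : ℝ≥0∞ :=
  ⨆ (δ : ℝ≥0∞) (_ : 0 < δ), hMeasAux h δ E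

/-- `Ω`: continuous paths on `[0,1]` vanishing at `0`, with the uniform metric. -/
abbrev PathSpace : Type := {f : C(unitInterval, ℝ) // f 0 = 0}

instance : MeasurableSpace PathSpace := borel PathSpace
instance : BorelSpace PathSpace := ⟨rfl⟩

/-- `μ` is a centered Gaussian process measure on path space with covariance `K`:
a probability measure under which every finite linear combination of coordinates
is a centered real Gaussian with the variance given by `K`. -/
def IsGaussianProcess (μ : Measure PathSpace) (K : unitInterval → unitInterval → ℝ) : Prop :=
  IsProbabilityMeasure μ ∧
  ∀ (n : ℕ) (t : Fin n → unitInterval) (c : Fin n → ℝ),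
    Measure.map (fun ω : PathSpace => ∑ i, c i * ω.1 (t i)) μ =
      ProbabilityTheory.gaussianReal 0
        (Real.toNNReal (∑ i, ∑ j, c i * c j * K (t i) (t j)))

/-- `W` is the Wiener measure: the coordinate process is centered Gaussian with
covariance `min s t`. -/
def IsWienerMeasure (W : Measure PathSpace) : Prop :=
  IsGaussianProcess W (fun s t => min (s : ℝ) (t : ℝ))

/-- `μ` is the law of fractional Brownian motion with Hurst parameter `H`. -/
def IsFBM (H : ℝ) (μ : Measure PathSpace) : Prop :=
  IsGaussianProcess μ (fun s t =>
    ((s : ℝ) ^ (2*H) + (t : ℝ) ^ (2*H) - |(t : ℝ) - (s : ℝ)| ^ (2*H)) / 2)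

/-- Clamping of a real number into the unit interval. -/
def clampI (t : ℝ) : unitInterval :=
  ⟨min (max t 0) 1, Set.mem_Icc.mpr ⟨le_min (le_max_right _ _) zero_le_one, min_le_right _ _⟩⟩

/-- The grid point `j/n` of the unit interval. -/
def gridPt (n j : ℕ) : unitInterval := clampI ((j : ℝ) / n)

/-- The discrete quadratic variation `Q_n(ω)`. -/
def Qvar (ω : PathSpace) (n : ℕ) : ℝ :=
  Real.sqrt ((1 / (n : ℝ)) *
    ∑ i ∈ Finset.range n, (ω.1 (gridPt n (i+1)) - ω.1 (gridPt n i)) ^ 2)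

/-- Lower Orey exponent `q^-(ω)`. -/
def oreyLower (ω : PathSpace) : EReal :=
  liminf (fun n : ℕ => ((-Real.log (Qvar ω n) / Real.log n : ℝ) : EReal)) atTop

/-- Upper Orey exponent `q^+(ω)`. -/
def oreyUpper (ω : PathSpace) : EReal :=
  limsup (fun n : ℕ => ((-Real.log (Qvar ω n) / Real.log n : ℝ) : EReal)) atTop

/-- The set `C_a` of `a`-Hölder paths. -/
def holderSet (a : ℝ) : Set PathSpace :=
  {ω | ∃ C : ℝ, ∀ x y : unitInterval, |ω.1 x - ω.1 y| ≤ C * |(x : ℝ) - (y : ℝ)| ^ a}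

/-- The set `C_a^- = ⋂_{0<b<a} C_b` of nearly `a`-Hölder paths. -/
def holderMinus (a : ℝ) : Set PathSpace := ⋂ b ∈ Set.Ioo (0:ℝ) a, holderSet b

/-- The set `C_q^crit` of critical `q`-Hölder paths: nearly `q`-Hölder paths whose
Orey exponent exists and equals `q`. -/
def holderCrit (q : ℝ) : Set PathSpace :=
  {ω | ω ∈ holderMinus q ∧ oreyLower ω = (q : EReal) ∧ oreyUpper ω = (q : EReal)}

/-- The set `Ω^crit` of critical Hölder paths. -/
def pathCrit : Set PathSpace := ⋃ q ∈ Set.Ioo (0:ℝ) 1, holderCrit q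

/-- The lower local order of a measure `μ` on path space at `ω`. -/
def lowerLocOrd (μ : Measure PathSpace) (ω : PathSpace) : EReal :=
  liminf (fun ε : ℝ =>
    ((Real.log (-Real.log ((μ (Metric.ball ω ε)).toReal)) / (-Real.log ε) : ℝ) : EReal))
    (𝓝[>] (0:ℝ))

/-- The upper local order of a measure `μ` on path space at `ω`. -/
def upperLocOrd (μ : Measure PathSpace) (ω : PathSpace) : EReal :=
  limsup (fun ε : ℝ =>
    ((Real.log (-Real.log ((μ (Metric.ball ω ε)).toReal)) / (-Real.log ε) : ℝ) : EReal))
    (𝓝[>] (0:ℝ))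

/-- The Hausdorff order of a set of paths: `sup {α > 0 : H^{h_α}(A) = ∞}` where
`h_α(ε) = exp(-ε^{-α})`. -/
def ordH (A : Set PathSpace) : ℝ≥0∞ :=
  ⨆ (α : ℝ) (_ : 0 < α ∧ hMeas (fun ε : ℝ => Real.exp (-(ε ^ (-α)))) A = ∞),
    ENNReal.ofReal α

/-- The level set `E(ξ)` of paths at which the local order of `μ` exists and
equals `ξ`. -/
def levelOrd (μ : Measure PathSpace) (ξ : ℝ) : Set PathSpace :=
  {ω | lowerLocOrd μ ω = (ξ : EReal) ∧ upperLocOrd μ ω = (ξ : EReal)}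

/-- The cylinder `C_n(ω̄, ε)` around `ω̄` of depth `n` and radius `ε`. -/
def cylinder (ωb : PathSpace) (n : ℕ) (ε : ℝ) : Set PathSpace :=
  {ω | ∀ j ∈ Finset.Icc 1 n, |ω.1 (gridPt n j) - ωb.1 (gridPt n j)| ≤ ε}

/-- The affine interpolation `L̄_j` of `ω̄` on `[(j-1)/n, j/n]`, evaluated at `t`. -/
def affInterp (ωb : PathSpace) (n j : ℕ) (t : ℝ) : ℝ :=
  ωb.1 (gridPt n (j-1)) +
    (t - ((j-1 : ℕ) : ℝ) / n) * n * (ωb.1 (gridPt n j) - ωb.1 (gridPt n (j-1)))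

/-- The maximal deviation `Δ_n(ω̄)` of `ω̄` from its chords on the `1/n`-grid. -/
def chordDev (ωb : PathSpace) (n : ℕ) : ℝ :=
  sSup {d : ℝ | ∃ j ∈ Finset.Icc 1 n, ∃ t ∈ Set.Icc (((j-1 : ℕ) : ℝ) / n) ((j : ℝ) / n),
    d = |ωb.1 (clampI t) - affInterp ωb n j t|}


/-!
Cut `[0, 1]` into `n` intervals: a Brownian path is the sum of the interpolation of its `n`
increments, i.i.d. of variance `1 / n`, and of `n` bridges independent of the increments.

Let `ω̄` be dyadically `a`-Hölder with `a < 1 / 2`. For `n = 2 ^ m` the bridges of `ω̄` are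
`O(2 ^ (-a * m))`, and so are those of the Brownian path with a probability bounded away from `0`.
Steering all the `2 ^ m` increments next to those of `ω̄` has probability at least
`exp (-O(2 ^ m * 2 ^ m * 2 ^ (-2 * a * m)))`, so at the scale `ε = 2 ^ (-a * m)` the ball around
`ω̄` has measure at least `exp (-O(ε ^ (-(2 / a - 2))))`, and the upper local order is at most
`2 / a - 2`.

Conversely the measure of the ball of radius `ε` is at most the product of the probabilities that
the increments fall within `2 * ε` of those of `ω̄`. When `ε` is a small multiple of `n ^ (-1 / 2)`
each factor is bounded away from `1`, so the lower local order is at least `2` everywhere. When at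
least half of the `2 ^ m` increments of `ω̄` exceed `2 ^ (-a * m)`, and `ε` is a quarter of that,
each of these contributes a factor `exp (-2 ^ m * 2 ^ (-2 * a * m) / 8)`, so the lower local order
is at least `2 / a - 2`.

By Borel–Cantelli, almost every path of a process whose increments over intervals of length `h` are
Gaussian of variance comparable to `h ^ (2 * H)` is dyadically `a`-Hölder for `a < H` and has many
large increments, in the above sense, for `a > H`.
-/
open ProbabilityTheory (gaussianReal gaussianPDFReal HasSubgaussianMGF iIndepFun IndepFun)
open scoped ProbabilityTheory

/-! ### The coordinate process -/

/-- Evaluation at time `t`, as a random variable on path space. -/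
def coord (t : unitInterval) (ω : PathSpace) : ℝ := ω.1 t

/-- The real vector space of random variables spanned by the evaluations `coord t`: under a
Gaussian process measure all of them are jointly Gaussian. -/
def coordSpan : Submodule ℝ (PathSpace → ℝ) := Submodule.span ℝ (range coord)

lemma coord_mem_coordSpan (t : unitInterval) : coord t ∈ coordSpan :=
  Submodule.subset_span (mem_range_self t)

lemma continuous_of_mem_coordSpan {f : PathSpace → ℝ} (hf : f ∈ coordSpan) : Continuous f := by
  induction hf using Submodule.span_induction with
  | mem _ h =>
    obtain ⟨t, rfl⟩ := h
    exact (continuous_eval_const t).comp continuous_subtype_val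
  | zero => exact continuous_const
  | add _ _ _ _ hf hg => exact hf.add hg
  | smul a _ _ hf => exact hf.const_smul a

section GaussianProcess

variable {μ : Measure PathSpace} {K : unitInterval → unitInterval → ℝ}

lemma IsGaussianProcess.exists_map_eq_gaussianReal (hμ : IsGaussianProcess μ K)
    {f : PathSpace → ℝ} (hf : f ∈ coordSpan) : ∃ v, μ.map f = gaussianReal 0 v := by
  obtain ⟨c, rfl⟩ := Finsupp.mem_span_range_iff_exists_finsupp.1 hf
  let e := c.support.equivFin
  refine ⟨_, Eq.trans ?_ (hμ.2 _ (fun i => (e.symm i : unitInterval)) (fun i => c (e.symm i)))⟩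
  congr 1
  ext ω
  rw [e.symm.sum_comp (fun t => c t * ω.1 t),
    Finset.sum_coe_sort c.support (fun t => c t * ω.1 t)]
  simp [Finsupp.sum, coord]

lemma IsGaussianProcess.isGaussianProcess_of_mem_coordSpan (hμ : IsGaussianProcess μ K)
    {S : Type*} {Y : S → PathSpace → ℝ} (hY : ∀ s, Y s ∈ coordSpan) :
    ProbabilityTheory.IsGaussianProcess Y μ where
  hasGaussianLaw I := by
    have hm : Measurable (fun ω ↦ I.restrict (Y · ω)) :=
      measurable_pi_lambda _ fun i => (continuous_of_mem_coordSpan (hY i)).measurable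
    refine ⟨ProbabilityTheory.isGaussian_of_map_eq_gaussianReal fun L => ⟨0, ?_⟩⟩
    rw [Measure.map_map L.continuous.measurable hm]
    refine hμ.exists_map_eq_gaussianReal ?_
    classical
    have hL : L ∘ (fun ω ↦ I.restrict (Y · ω)) = ∑ i : I, L (Pi.single i 1) • Y i := by
      ext ω
      simp only [Function.comp_apply, Finset.sum_apply, Pi.smul_apply, smul_eq_mul]
      conv_lhs => rw [pi_eq_sum_univ' (I.restrict fun x => Y x ω), map_sum]
      exact Finset.sum_congr rfl fun i _ => by simp [mul_comm, Pi.single]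
    rw [hL]
    exact Submodule.sum_mem _ fun i _ => Submodule.smul_mem _ _ (hY i)

lemma IsGaussianProcess.memLp_two (hμ : IsGaussianProcess μ K) {f : PathSpace → ℝ}
    (hf : f ∈ coordSpan) : MemLp f 2 μ :=
  ((hμ.isGaussianProcess_of_mem_coordSpan (Y := fun _ : Unit => f) fun _ => hf).hasGaussianLaw_eval
    ()).memLp_two

lemma IsGaussianProcess.map_coord (hμ : IsGaussianProcess μ K) (t : unitInterval) :
    μ.map (coord t) = gaussianReal 0 (K t t).toNNReal := by
  simpa using! hμ.2 1 ![t] ![1]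

lemma IsGaussianProcess.map_coord_sub (hμ : IsGaussianProcess μ K) (s t : unitInterval) :
    μ.map (coord t - coord s) = gaussianReal 0 (K t t - K t s - K s t + K s s).toNNReal := by
  have h := hμ.2 2 ![t, s] ![1, -1]
  simp only [Fin.sum_univ_two] at h
  convert h using 2
  · ext ω
    simp [coord, sub_eq_add_neg]
  · congr 1
    simp
    ring

end GaussianProcess

lemma variance_eq_of_map_eq_gaussianReal {Ω : Type*} [MeasurableSpace Ω] {μ : Measure Ω}
    {X : Ω → ℝ} {m : ℝ} {v : ℝ≥0} (hX : AEMeasurable X μ) (h : μ.map X = gaussianReal m v) :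
    Var[X; μ] = v := by
  rw [← ProbabilityTheory.variance_id_map hX, h, ProbabilityTheory.variance_id_gaussianReal]

/-- A measure under which `ω t - ω s` is centered Gaussian with variance comparable to
`|t - s| ^ (2 * H)`, as for the quasi-helices of Kahane. The increments need not be jointly
Gaussian. -/
def HasGaussianIncrements (H : ℝ) (μ : Measure PathSpace) : Prop :=
  ∃ c > 0, ∃ C > 0, ∀ s t : unitInterval, ∃ v : ℝ≥0,
    μ.map (coord t - coord s) = gaussianReal 0 v ∧
      c * |(t : ℝ) - s| ^ (2 * H) ≤ v ∧ v ≤ C * |(t : ℝ) - s| ^ (2 * H)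

lemma IsFBM.hasGaussianIncrements {H : ℝ} (hH : 0 < H) {μ : Measure PathSpace} (hμ : IsFBM H μ) :
    HasGaussianIncrements H μ := by
  refine ⟨1, one_pos, 1, one_pos, fun s t => ⟨_, IsGaussianProcess.map_coord_sub hμ s t, ?_⟩⟩
  rw [← le_antisymm_iff, one_mul, sub_self, sub_self, abs_zero, Real.zero_rpow (by positivity),
    abs_sub_comm (s : ℝ)]
  ring_nf
  rw [Real.coe_toNNReal _ (by positivity)]

section Wiener

variable {W : Measure PathSpace}

lemma IsWienerMeasure.isProbabilityMeasure (hW : IsWienerMeasure W) : IsProbabilityMeasure W :=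
  hW.1

lemma IsWienerMeasure.map_coord_sub (hW : IsWienerMeasure W) (s t : unitInterval) :
    W.map (coord t - coord s) = gaussianReal 0 |(t : ℝ) - s|.toNNReal := by
  rw [IsGaussianProcess.map_coord_sub hW]
  congr 2
  rw [min_self, min_self, min_comm (s : ℝ)]
  linarith [max_sub_min_eq_abs (t : ℝ) s, abs_sub_comm (t : ℝ) s, min_add_max (t : ℝ) s]

lemma IsWienerMeasure.hasGaussianIncrements (hW : IsWienerMeasure W) :
    HasGaussianIncrements (1 / 2) W := by
  refine ⟨1, one_pos, 1, one_pos, fun s t => ⟨_, hW.map_coord_sub s t, ?_⟩⟩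
  rw [← le_antisymm_iff, one_mul, Real.coe_toNNReal _ (abs_nonneg _)]
  norm_num

lemma IsWienerMeasure.covariance_coord (hW : IsWienerMeasure W) (s t : unitInterval) :
    cov[coord s, coord t; W] = min (s : ℝ) t := by
  have := hW.isProbabilityMeasure
  have hL := fun s => IsGaussianProcess.memLp_two hW (coord_mem_coordSpan s)
  have hvar : ∀ s, Var[coord s; W] = s := fun s => by
    rw [variance_eq_of_map_eq_gaussianReal (hL s).aemeasurable
      (IsGaussianProcess.map_coord hW s), min_self, Real.coe_toNNReal _ s.2.1]
  have h := ProbabilityTheory.variance_sub (hL t) (hL s)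
  rw [variance_eq_of_map_eq_gaussianReal ((hL t).sub (hL s)).aemeasurable (hW.map_coord_sub s t),
    hvar, hvar, ProbabilityTheory.covariance_comm, Real.coe_toNNReal _ (abs_nonneg _)] at h
  linarith [max_sub_min_eq_abs (s : ℝ) t, abs_sub_comm (t : ℝ) s, min_add_max (s : ℝ) t]

lemma IsWienerMeasure.covariance_coord_sub_of_le (hW : IsWienerMeasure W)
    {s t u v : unitInterval} (hst : s ≤ t) (htu : t ≤ u) (huv : u ≤ v) :
    cov[coord t - coord s, coord v - coord u; W] = 0 := by
  have := hW.isProbabilityMeasure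
  have hL := fun s => IsGaussianProcess.memLp_two hW (coord_mem_coordSpan s)
  rw [ProbabilityTheory.covariance_sub_left (hL t) (hL s) ((hL v).sub (hL u)),
    ProbabilityTheory.covariance_sub_right (hL t) (hL v) (hL u),
    ProbabilityTheory.covariance_sub_right (hL s) (hL v) (hL u)]
  simp only [hW.covariance_coord]
  have hst' : (s : ℝ) ≤ t := hst
  have htu' : (t : ℝ) ≤ u := htu
  have huv' : (u : ℝ) ≤ v := huv
  rw [min_eq_left htu', min_eq_left (hst'.trans htu'), min_eq_left (htu'.trans huv'),
    min_eq_left (hst'.trans (htu'.trans huv'))]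
  ring

end Wiener

/-! ### Gaussian estimates -/

lemma gaussianPDFReal_le (m : ℝ) {v : ℝ≥0} (hv : v ≠ 0) (x : ℝ) :
    gaussianPDFReal m v x ≤ (2 * √v)⁻¹ := by
  have hsqrt : 2 * √(v : ℝ) ≤ √(2 * Real.pi * v) := by
    apply Real.le_sqrt_of_sq_le
    rw [mul_pow, Real.sq_sqrt v.coe_nonneg]
    gcongr
    linarith [Real.pi_gt_three]
  have hexp : Real.exp (-(x - m) ^ 2 / (2 * v)) ≤ 1 := by
    rw [Real.exp_le_one_iff, neg_div]
    exact neg_nonpos.2 (by positivity)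
  calc gaussianPDFReal m v x ≤ (2 * √v)⁻¹ * 1 := by
        rw [gaussianPDFReal]
        gcongr
    _ = (2 * √v)⁻¹ := mul_one _

lemma gaussianReal_Icc_le (m : ℝ) {v : ℝ≥0} (hv : v ≠ 0) (a b : ℝ) :
    gaussianReal m v (Icc a b) ≤ ENNReal.ofReal ((b - a) / (2 * √v)) := by
  rw [ProbabilityTheory.gaussianReal_apply m hv]
  calc ∫⁻ x in Icc a b, ProbabilityTheory.gaussianPDF m v x
      ≤ ∫⁻ _ in Icc a b, ENNReal.ofReal (2 * √v)⁻¹ :=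
        lintegral_mono fun x => ENNReal.ofReal_le_ofReal (gaussianPDFReal_le m hv x)
    _ = ENNReal.ofReal ((b - a) / (2 * √v)) := by
        rw [setLIntegral_const, Real.volume_Icc, ← ENNReal.ofReal_mul (by positivity),
          div_eq_inv_mul]

lemma le_gaussianPDFReal {v : ℝ≥0} (hv : v ≠ 0) {x y : ℝ} (hxy : |x| ≤ y) :
    (4 * √v)⁻¹ * Real.exp (-y ^ 2 / (2 * v)) ≤ gaussianPDFReal 0 v x := by
  have : 0 < (v : ℝ) := by positivity
  have hsqrt : √(2 * Real.pi * v) ≤ 4 * √(v : ℝ) := by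
    rw [Real.sqrt_le_left (by positivity), mul_pow, Real.sq_sqrt v.coe_nonneg]
    gcongr
    linarith [Real.pi_lt_four]
  have hsq : x ^ 2 ≤ y ^ 2 := sq_le_sq' (abs_le.1 hxy).1 (abs_le.1 hxy).2
  rw [gaussianPDFReal, sub_zero]
  have := Real.pi_pos
  gcongr

lemma le_gaussianReal_Icc {v : ℝ≥0} (hv : v ≠ 0) (a r : ℝ) :
    ENNReal.ofReal (r / (2 * √v) * Real.exp (-(|a| + r) ^ 2 / (2 * v))) ≤
      gaussianReal 0 v (Icc (a - r) (a + r)) := by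
  rw [ProbabilityTheory.gaussianReal_apply 0 hv]
  calc ENNReal.ofReal (r / (2 * √v) * Real.exp (-(|a| + r) ^ 2 / (2 * v)))
      = ∫⁻ _ in Icc (a - r) (a + r),
          ENNReal.ofReal ((4 * √v)⁻¹ * Real.exp (-(|a| + r) ^ 2 / (2 * v))) := by
        rw [setLIntegral_const, Real.volume_Icc, ← ENNReal.ofReal_mul (by positivity)]
        congr 1
        field_simp
        ring
    _ ≤ ∫⁻ x in Icc (a - r) (a + r), ProbabilityTheory.gaussianPDF 0 v x := by
        refine setLIntegral_mono (ProbabilityTheory.measurable_gaussianPDF 0 v) fun x hx =>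
          ENNReal.ofReal_le_ofReal (le_gaussianPDFReal hv (abs_le.2 ?_))
        constructor <;> linarith [hx.1, hx.2, le_abs_self a, neg_abs_le a]

lemma hasSubgaussianMGF_of_map_eq_gaussianReal {Ω : Type*} [MeasurableSpace Ω] {μ : Measure Ω}
    {X : Ω → ℝ} {v w : ℝ≥0} (hX : AEMeasurable X μ) (h : μ.map X = gaussianReal 0 v)
    (hvw : v ≤ w) : HasSubgaussianMGF X w μ := by
  rw [← HasSubgaussianMGF.id_map_iff hX, h]
  refine ⟨ProbabilityTheory.integrable_exp_mul_gaussianReal, fun t => ?_⟩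
  simp only [ProbabilityTheory.mgf_id_gaussianReal, zero_mul, zero_add]
  gcongr

lemma measureReal_le_abs_le_of_hasSubgaussianMGF {Ω : Type*} [MeasurableSpace Ω] {μ : Measure Ω}
    {X : Ω → ℝ} {c : ℝ≥0} (h : HasSubgaussianMGF X c μ) {x : ℝ} (hx : 0 ≤ x) :
    μ.real {ω | x ≤ |X ω|} ≤ 2 * Real.exp (-x ^ 2 / (2 * c)) := by
  simp only [le_abs, ofPred_or]
  rw [two_mul]
  exact (measureReal_union_le _ _).trans (add_le_add (h.measure_ge_le hx) (h.neg.measure_ge_le hx))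

lemma gaussianReal_Icc_le_exp (v : ℝ≥0) {a s x : ℝ} (hx : 0 ≤ x) (hxa : x + s ≤ |a|) :
    gaussianReal 0 v (Icc (a - s) (a + s)) ≤ ENNReal.ofReal (Real.exp (-x ^ 2 / (2 * v))) := by
  have hid : HasSubgaussianMGF id v (gaussianReal 0 v) :=
    hasSubgaussianMGF_of_map_eq_gaussianReal aemeasurable_id Measure.map_id le_rfl
  rw [← ofReal_measureReal]
  refine ENNReal.ofReal_le_ofReal ?_
  rcases le_abs.1 hxa with h | h
  · exact (measureReal_mono fun y hy => show x ≤ y by linarith [hy.1]).trans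
      (hid.measure_ge_le hx)
  · exact (measureReal_mono fun y hy => show x ≤ -y by linarith [hy.2]).trans
      (hid.neg.measure_ge_le hx)

/-! ### Borel–Cantelli and counting -/

lemma summable_pow_mul_exp_neg_mul_pow {b c q : ℝ} (hb : 0 ≤ b) (hc : 0 < c) (hq : 1 < q) :
    Summable fun m : ℕ => b ^ m * Real.exp (-(c * q ^ m)) := by
  obtain ⟨k, hk⟩ := pow_unbounded_of_one_lt b hq
  have : 0 < q := one_pos.trans hq
  refine .of_nonneg_of_le (fun m => by positivity) (fun m => ?_)
    ((summable_geometric_of_lt_one (r := b / q ^ k) (by positivity)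
      ((div_lt_one (by positivity)).2 hk)).mul_left (k.factorial / c ^ k))
  have hexp := Real.pow_div_factorial_le_exp (c * q ^ m) (by positivity) k
  calc b ^ m * Real.exp (-(c * q ^ m)) ≤ b ^ m * ((c * q ^ m) ^ k / k.factorial)⁻¹ := by
        rw [Real.exp_neg]
        gcongr
    _ = k.factorial / c ^ k * (b / q ^ k) ^ m := by
        rw [mul_pow, inv_div, div_pow, ← pow_mul, ← pow_mul, mul_comm m k]
        field_simp

lemma ae_eventually_notMem_of_le_ofReal {α : Type*} [MeasurableSpace α] {μ : Measure α}
    {s : ℕ → Set α} {f : ℕ → ℝ} (hf : Summable f) (h : ∀ m, μ (s m) ≤ ENNReal.ofReal (f m)) :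
    ∀ᵐ x ∂μ, ∀ᶠ m in atTop, x ∉ s m :=
  ae_eventually_notMem (ne_top_of_le_ne_top hf.tsum_ofReal_ne_top (ENNReal.tsum_le_tsum h))

lemma measure_card_le_two_mul_card_le {α ι : Type*} [MeasurableSpace α] {μ : Measure α}
    [Fintype ι] [Nonempty ι] {S : ι → Set α} [∀ x, DecidablePred fun j => x ∈ S j]
    (hS : ∀ j, MeasurableSet (S j)) {p : ℝ≥0∞} (hp : ∀ j, μ (S j) ≤ p) :
    μ {x | Fintype.card ι ≤ 2 * (Finset.univ.filter fun j => x ∈ S j).card} ≤ 2 * p := by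
  set N : ℝ≥0∞ := ↑(Fintype.card ι)
  have hN0 : N ≠ 0 := Nat.cast_ne_zero.2 Fintype.card_ne_zero
  have hN : N ≠ ∞ := ENNReal.natCast_ne_top _
  set f : α → ℝ≥0∞ := fun x => ∑ j, (S j).indicator 1 x
  have hf : Measurable f := Finset.measurable_fun_sum _ fun j _ => measurable_one.indicator (hS j)
  have hint : ∫⁻ x, f x ∂μ ≤ N * p := by
    rw [lintegral_finsetSum _ fun j _ => measurable_one.indicator (hS j)]
    simp_rw [lintegral_indicator_one (hS _)]
    exact (Finset.sum_le_card_nsmul _ _ _ fun j _ => hp j).trans_eq (nsmul_eq_mul _ _)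
  have hset : {x | Fintype.card ι ≤ 2 * (Finset.univ.filter fun j => x ∈ S j).card} =
      {x | N ≤ 2 * f x} := by
    ext x
    have hcount : f x = (Finset.univ.filter fun j => x ∈ S j).card := by
      simp [f, indicator_apply]
    simp only [mem_ofPred, hcount, N]
    exact_mod_cast Iff.rfl
  rw [hset, ← ENNReal.mul_le_mul_iff_right hN0 hN]
  calc N * μ {x | N ≤ 2 * f x} ≤ ∫⁻ x, 2 * f x ∂μ :=
        mul_meas_ge_le_lintegral₀ (hf.const_mul 2).aemeasurable N
    _ ≤ 2 * (N * p) := by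
        rw [lintegral_const_mul _ hf]
        gcongr
    _ = N * (2 * p) := mul_left_comm _ _ _

/-! ### Increments along a grid and linear interpolation -/

/-- The increment of a path over the `j`-th cell `[j/n, (j+1)/n]` of the `1/n`-grid. Grid points
are clamped to the unit interval, so this is `0` for `n ≤ j`. -/
def incr (n j : ℕ) : PathSpace → ℝ := coord (gridPt n (j + 1)) - coord (gridPt n j)

lemma incr_mem_coordSpan (n j : ℕ) : incr n j ∈ coordSpan :=
  Submodule.sub_mem _ (coord_mem_coordSpan _) (coord_mem_coordSpan _)

lemma measurable_incr (n j : ℕ) : Measurable (incr n j) :=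
  (continuous_of_mem_coordSpan (incr_mem_coordSpan n j)).measurable

lemma clampI_monotone : Monotone clampI := fun _ _ h =>
  Subtype.mk_le_mk.2 (min_le_min_right _ (max_le_max_right _ h))

lemma gridPt_monotone (n : ℕ) : Monotone (gridPt n) := fun i j h => clampI_monotone (by gcongr)

lemma coe_gridPt {n j : ℕ} (hj : j ≤ n) : (gridPt n j : ℝ) = j / n := by
  have hle : (j : ℝ) / n ≤ 1 := div_le_one_of_le₀ (by exact_mod_cast hj) n.cast_nonneg
  simp only [gridPt, clampI, max_eq_left (show 0 ≤ (j : ℝ) / n by positivity), min_eq_left hle]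

lemma gridPt_zero (n : ℕ) : gridPt n 0 = 0 := by
  apply Subtype.ext
  simp [coe_gridPt (Nat.zero_le n)]

lemma gridPt_succ_eq_of_le {n j : ℕ} (h : n ≤ j) : gridPt n (j + 1) = gridPt n j := by
  rcases n.eq_zero_or_pos with rfl | hn
  · simp [gridPt]
  · have hone : ∀ k, n ≤ k → gridPt n k = 1 := fun k hk =>
      le_antisymm le_top ((gridPt_monotone n hk).trans' (Subtype.coe_le_coe.1 (by
        rw [coe_gridPt le_rfl, div_self (by positivity)]
        exact le_rfl)))
    rw [hone j h, hone (j + 1) (by omega)]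

lemma incr_eq_zero {n j : ℕ} (h : n ≤ j) (ω : PathSpace) : incr n j ω = 0 := by
  rw [incr, gridPt_succ_eq_of_le h, sub_self, Pi.zero_apply]

lemma coord_gridPt_eq_sum (n j : ℕ) (ω : PathSpace) :
    coord (gridPt n j) ω = ∑ i ∈ Finset.range j, incr n i ω := by
  have htelescope := Finset.sum_range_sub (fun i => coord (gridPt n i) ω) j
  have hzero : coord (gridPt n 0) ω = 0 := by rw [gridPt_zero, coord, ω.2]
  rw [hzero, sub_zero] at htelescope
  exact htelescope.symm

lemma floor_mul_le (n : ℕ) (t : unitInterval) : ⌊n * (t : ℝ)⌋₊ ≤ n :=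
  Nat.floor_le_of_le (mul_le_of_le_one_right n.cast_nonneg t.2.2)

/-- The last point of the `1/n`-grid before `t`. -/
def gridFloor (n : ℕ) (t : unitInterval) : unitInterval := gridPt n ⌊n * (t : ℝ)⌋₊

/-- The value at `t` of the piecewise linear interpolation of a path on the `1/n`-grid. -/
def interp (n : ℕ) (t : unitInterval) : PathSpace → ℝ :=
  coord (gridFloor n t) + (n * (t : ℝ) - ⌊n * (t : ℝ)⌋₊) • incr n ⌊n * (t : ℝ)⌋₊

/-- The deviation at `t` of a path from its piecewise linear interpolation on the `1/n`-grid: for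
Brownian motion these are the Brownian bridges on the cells of the grid. -/
def bridge (n : ℕ) (t : unitInterval) : PathSpace → ℝ := coord t - interp n t

lemma bridge_mem_coordSpan (n : ℕ) (t : unitInterval) : bridge n t ∈ coordSpan :=
  Submodule.sub_mem _ (coord_mem_coordSpan _) (Submodule.add_mem _ (coord_mem_coordSpan _)
    (Submodule.smul_mem _ _ (incr_mem_coordSpan _ _)))

lemma abs_mul_sub_floor_mul_le (n : ℕ) (t : unitInterval) (x : ℝ) :
    |(n * (t : ℝ) - ⌊n * (t : ℝ)⌋₊) * x| ≤ |x| := by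
  have hfloor := Nat.floor_le (mul_nonneg n.cast_nonneg t.2.1)
  have hlt := Nat.lt_floor_add_one (n * (t : ℝ))
  rw [abs_mul, abs_of_nonneg (sub_nonneg.2 hfloor)]
  exact mul_le_of_le_one_left (abs_nonneg _) (by linarith)

lemma abs_interp_sub_le {n : ℕ} {s : ℝ} {ω ω' : PathSpace}
    (h : ∀ j < n, |incr n j ω - incr n j ω'| ≤ s) (t : unitInterval) :
    |interp n t ω - interp n t ω'| ≤ n * s := by
  set d : ℕ → ℝ := fun i => incr n i ω - incr n i ω' with hd
  have hdn : d n = 0 := by simp [hd, incr_eq_zero le_rfl]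
  set k := ⌊n * (t : ℝ)⌋₊ with hk
  have hsub : Finset.range (k + 1) ⊆ Finset.range (n + 1) :=
    Finset.range_subset_range.2 (Nat.succ_le_succ (floor_mul_le n t))
  calc |interp n t ω - interp n t ω'|
      = |∑ i ∈ Finset.range k, d i + (n * (t : ℝ) - k) * d k| := by
        simp only [interp, gridFloor, Pi.add_apply, Pi.smul_apply, smul_eq_mul, ← hk,
          coord_gridPt_eq_sum, hd, Finset.sum_sub_distrib]
        ring_nf
    _ ≤ ∑ i ∈ Finset.range k, |d i| + |d k| :=
        (abs_add_le _ _).trans (add_le_add (Finset.abs_sum_le_sum_abs _ _)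
          (abs_mul_sub_floor_mul_le n t _))
    _ ≤ ∑ i ∈ Finset.range (n + 1), |d i| := by
        rw [← Finset.sum_range_succ]
        exact Finset.sum_le_sum_of_subset_of_nonneg hsub fun _ _ _ => abs_nonneg _
    _ = ∑ i ∈ Finset.range n, |d i| := by rw [Finset.sum_range_succ, hdn, abs_zero, add_zero]
    _ ≤ n * s := by
        refine (Finset.sum_le_card_nsmul _ _ s fun i hi => h i (Finset.mem_range.1 hi)).trans_eq ?_
        rw [Finset.card_range, nsmul_eq_mul]

lemma dist_le_of_abs_bridge_le_of_abs_incr_sub_le {ι : Type*} {t : ι → unitInterval}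
    (ht : DenseRange t) {n : ℕ} {s D D' : ℝ} {ω ω' : PathSpace}
    (hω : ∀ i, |bridge n (t i) ω| ≤ D) (hω' : ∀ i, |bridge n (t i) ω'| ≤ D')
    (h : ∀ j < n, |incr n j ω - incr n j ω'| ≤ s) : dist ω ω' ≤ D + D' + n * s := by
  have hdense : ∀ i, |ω.1 (t i) - ω'.1 (t i)| ≤ D + D' + n * s := fun i =>
    calc |ω.1 (t i) - ω'.1 (t i)| = |(bridge n (t i) ω - bridge n (t i) ω') +
          (interp n (t i) ω - interp n (t i) ω')| := by
          simp only [bridge, coord, Pi.sub_apply]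
          ring_nf
      _ ≤ |bridge n (t i) ω - bridge n (t i) ω'| + |interp n (t i) ω - interp n (t i) ω'| :=
          abs_add_le _ _
      _ ≤ D + D' + n * s :=
          add_le_add ((abs_sub _ _).trans (add_le_add (hω i) (hω' i))) (abs_interp_sub_le h _)
  have hall : ∀ u, |ω.1 u - ω'.1 u| ≤ D + D' + n * s := fun u =>
    ht.induction_on u (isClosed_le (by fun_prop) continuous_const) hdense
  exact (ContinuousMap.dist_le ((abs_nonneg _).trans (hall 0))).2 hall

/-! ### Dyadic regularity -/

lemma coe_gridFloor (n : ℕ) (t : unitInterval) : (gridFloor n t : ℝ) = ⌊n * (t : ℝ)⌋₊ / n :=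
  coe_gridPt (floor_mul_le n t)

lemma abs_gridFloor_sub_le {n : ℕ} (hn : 0 < n) (t : unitInterval) :
    |(gridFloor n t : ℝ) - t| ≤ 1 / n := by
  have hfloor := Nat.floor_le (mul_nonneg n.cast_nonneg t.2.1)
  have hlt := Nat.lt_floor_add_one (n * (t : ℝ))
  have hsub : (gridFloor n t : ℝ) - t = (⌊n * (t : ℝ)⌋₊ - n * t) / n := by
    rw [coe_gridFloor]
    field_simp
  rw [hsub, abs_div, Nat.abs_cast]
  gcongr
  exact abs_le.2 ⟨by linarith, by linarith⟩

lemma tendsto_gridFloor_two_pow (t : unitInterval) :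
    Tendsto (fun m : ℕ => gridFloor (2 ^ m) t) atTop (𝓝 t) := by
  rw [tendsto_subtype_rng, tendsto_iff_dist_tendsto_zero]
  refine squeeze_zero (fun _ => dist_nonneg) (fun m => abs_gridFloor_sub_le (by positivity) t) ?_
  simpa using! tendsto_pow_atTop_nhds_zero_of_lt_one (r := (1 / 2 : ℝ)) (by norm_num) (by norm_num)

lemma gridPt_two_pow_succ (m k : ℕ) : gridPt (2 ^ (m + 1)) (2 * k) = gridPt (2 ^ m) k := by
  rw [gridPt, gridPt]
  congr 1
  push_cast
  rw [pow_succ']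
  field_simp

lemma gridFloor_two_pow_succ (m : ℕ) (t : unitInterval) :
    ∃ k, gridFloor (2 ^ m) t = gridPt (2 ^ (m + 1)) k ∧
      (gridFloor (2 ^ (m + 1)) t = gridPt (2 ^ (m + 1)) k ∨
        gridFloor (2 ^ (m + 1)) t = gridPt (2 ^ (m + 1)) (k + 1)) := by
  have hx : 0 ≤ (2 ^ m : ℕ) * (t : ℝ) := mul_nonneg (Nat.cast_nonneg _) t.2.1
  have hdouble : ((2 ^ (m + 1) : ℕ) : ℝ) * t = 2 * ((2 ^ m : ℕ) * t) := by
    push_cast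
    ring
  refine ⟨2 * ⌊(2 ^ m : ℕ) * (t : ℝ)⌋₊, (gridPt_two_pow_succ _ _).symm, ?_⟩
  rw [gridFloor, hdouble]
  have hfloor := Nat.floor_le hx
  have hlt := Nat.lt_floor_add_one ((2 ^ m : ℕ) * (t : ℝ))
  have hlower : 2 * ⌊(2 ^ m : ℕ) * (t : ℝ)⌋₊ ≤ ⌊2 * ((2 ^ m : ℕ) * (t : ℝ))⌋₊ :=
    Nat.le_floor (by push_cast at *; linarith)
  have hupper : ⌊2 * ((2 ^ m : ℕ) * (t : ℝ))⌋₊ < 2 * ⌊(2 ^ m : ℕ) * (t : ℝ)⌋₊ + 2 :=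
    (Nat.floor_lt (by positivity)).2 (by push_cast at *; linarith)
  obtain h | h : ⌊2 * ((2 ^ m : ℕ) * (t : ℝ))⌋₊ = 2 * ⌊(2 ^ m : ℕ) * (t : ℝ)⌋₊ ∨
      ⌊2 * ((2 ^ m : ℕ) * (t : ℝ))⌋₊ = 2 * ⌊(2 ^ m : ℕ) * (t : ℝ)⌋₊ + 1 := by omega
  · exact Or.inl (by rw [h])
  · exact Or.inr (by rw [h])

/-- All dyadic increments of level `m ≥ N` are at most `r ^ m`. For `r = 2 ^ (-a)` this expresses
`a`-Hölder continuity, the constant being traded for the starting level `N`. -/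
def DyadicHolder (r : ℝ) (N : ℕ) (ω : PathSpace) : Prop :=
  ∀ m ≥ N, ∀ k, |incr (2 ^ m) k ω| ≤ r ^ m

/-- From some level on, at least half of the dyadic increments of level `m` exceed `r ^ m`. -/
def DyadicRough (r : ℝ) (ω : PathSpace) : Prop :=
  ∀ᶠ m in atTop,
    2 ^ m ≤ 2 * (Finset.univ.filter fun j : Fin (2 ^ m) => r ^ m ≤ |incr (2 ^ m) j ω|).card

section DyadicHolder

variable {r : ℝ} {N : ℕ} {ω : PathSpace}

lemma DyadicHolder.dist_gridFloor_succ_le (h : DyadicHolder r N ω) (hr : 0 ≤ r) {m : ℕ}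
    (hm : N ≤ m) (t : unitInterval) :
    dist (ω.1 (gridFloor (2 ^ m) t)) (ω.1 (gridFloor (2 ^ (m + 1)) t)) ≤ r ^ (m + 1) := by
  obtain ⟨k, hk, hk' | hk'⟩ := gridFloor_two_pow_succ m t
  · rw [hk, hk', dist_self]
    positivity
  · rw [hk, hk', dist_comm]
    exact h (m + 1) (by omega) k

lemma DyadicHolder.dist_gridFloor_le (h : DyadicHolder r N ω) (hr : 0 ≤ r) (hr1 : r < 1) {m : ℕ}
    (hm : N ≤ m) (t : unitInterval) :
    dist (ω.1 (gridFloor (2 ^ m) t)) (ω.1 t) ≤ r ^ (m + 1) / (1 - r) := by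
  refine dist_le_of_le_geometric_of_tendsto₀ r (r ^ (m + 1)) hr1
    (f := fun i => ω.1 (gridFloor (2 ^ (m + i)) t)) (fun i => ?_) ?_
  · rw [← pow_add, add_right_comm]
    exact h.dist_gridFloor_succ_le hr (by omega) t
  · simp_rw [add_comm m]
    exact (ω.1.continuous.tendsto t).comp
      ((tendsto_add_atTop_iff_nat m).2 (tendsto_gridFloor_two_pow t))

lemma DyadicHolder.abs_bridge_le (h : DyadicHolder r N ω) (hr : 0 ≤ r) (hr1 : r < 1) {m : ℕ}
    (hm : N ≤ m) (t : unitInterval) : |bridge (2 ^ m) t ω| ≤ r ^ m / (1 - r) := by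
  set n : ℕ := 2 ^ m
  have hinc := (abs_mul_sub_floor_mul_le n t _).trans (h m hm ⌊n * (t : ℝ)⌋₊)
  have hfloor := h.dist_gridFloor_le hr hr1 hm t
  rw [dist_comm, Real.dist_eq] at hfloor
  have h1r : 0 < 1 - r := by linarith
  calc |bridge n t ω| = |(ω.1 t - ω.1 (gridFloor n t)) -
        (n * (t : ℝ) - ⌊n * (t : ℝ)⌋₊) * incr n ⌊n * (t : ℝ)⌋₊ ω| := by
        simp only [bridge, interp, coord, Pi.sub_apply, Pi.add_apply, Pi.smul_apply, smul_eq_mul]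
        ring_nf
    _ ≤ r ^ (m + 1) / (1 - r) + r ^ m := (abs_sub _ _).trans (add_le_add hfloor hinc)
    _ = r ^ m / (1 - r) := by
        field_simp
        ring

end DyadicHolder

section HasGaussianIncrements

variable {H r : ℝ} {μ : Measure PathSpace}

lemma HasGaussianIncrements.isProbabilityMeasure (hμ : HasGaussianIncrements H μ) :
    IsProbabilityMeasure μ := by
  obtain ⟨c, -, C, -, h⟩ := hμ
  obtain ⟨v, hv, -⟩ := h 0 0
  refine (Measure.isProbabilityMeasure_map_iff (f := coord 0 - coord 0)
    (sub_self (coord 0) ▸ aemeasurable_const)).1 ?_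
  rw [hv]
  infer_instance

lemma HasGaussianIncrements.exists_map_incr_two_pow (hμ : HasGaussianIncrements H μ) :
    ∃ c > 0, ∃ C > 0, ∀ m, ∀ j < 2 ^ m, ∃ v : ℝ≥0,
      μ.map (incr (2 ^ m) j) = gaussianReal 0 v ∧
        c * (((1 / 2 : ℝ) ^ H) ^ m) ^ 2 ≤ v ∧ v ≤ C * (((1 / 2 : ℝ) ^ H) ^ m) ^ 2 := by
  obtain ⟨c, hc, C, hC, h⟩ := hμ
  refine ⟨c, hc, C, hC, fun m j hj => ?_⟩
  have hmesh : |(gridPt (2 ^ m) (j + 1) : ℝ) - gridPt (2 ^ m) j| = (1 / 2) ^ m := by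
    rw [coe_gridPt (by omega), coe_gridPt hj.le, ← sub_div, Nat.cast_add_one, add_sub_cancel_left]
    simp
  have hpow : ((1 / 2 : ℝ) ^ m) ^ (2 * H) = (((1 / 2 : ℝ) ^ H) ^ m) ^ 2 := by
    simp only [← Real.rpow_natCast, ← Real.rpow_mul (show (0 : ℝ) ≤ 1 / 2 by norm_num)]
    congr 1
    push_cast
    ring
  have := h (gridPt (2 ^ m) j) (gridPt (2 ^ m) (j + 1))
  rwa [hmesh, hpow] at this

lemma HasGaussianIncrements.ae_exists_dyadicHolder (hμ : HasGaussianIncrements H μ)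
    (hr : (1 / 2 : ℝ) ^ H < r) : ∀ᵐ ω ∂μ, ∃ N, DyadicHolder r N ω := by
  have := hμ.isProbabilityMeasure
  obtain ⟨_, -, C, hC, hmap⟩ := hμ.exists_map_incr_two_pow
  set s : ℝ := (1 / 2 : ℝ) ^ H
  have hs0 : 0 < s := by positivity
  have hr0 : 0 < r := hs0.trans hr
  have hq : 1 < (r / s) ^ 2 := one_lt_pow₀ ((one_lt_div hs0).2 hr) two_ne_zero
  have htail : ∀ m, ∀ k ∈ Finset.range (2 ^ m), μ.real {ω | r ^ m ≤ |incr (2 ^ m) k ω|} ≤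
      2 * Real.exp (-((2 * C)⁻¹ * ((r / s) ^ 2) ^ m)) := fun m k hk => by
    obtain ⟨v, hv, -, hvC⟩ := hmap m k (Finset.mem_range.1 hk)
    have hsub := hasSubgaussianMGF_of_map_eq_gaussianReal (w := (C * (s ^ m) ^ 2).toNNReal)
      (measurable_incr _ _).aemeasurable hv (NNReal.le_toNNReal_of_coe_le hvC)
    refine (measureReal_le_abs_le_of_hasSubgaussianMGF hsub (by positivity)).trans_eq ?_
    rw [Real.coe_toNNReal _ (by positivity), div_pow, div_pow]
    field_simp
    ring_nf
  have hunion : ∀ m, μ (⋃ k ∈ Finset.range (2 ^ m), {ω | r ^ m ≤ |incr (2 ^ m) k ω|}) ≤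
      ENNReal.ofReal (2 * (2 ^ m * Real.exp (-((2 * C)⁻¹ * ((r / s) ^ 2) ^ m)))) := fun m => by
    rw [← ofReal_measureReal (measure_ne_top _ _)]
    refine ENNReal.ofReal_le_ofReal ((measureReal_biUnion_finset_le _ _).trans
      ((Finset.sum_le_card_nsmul _ _ _ (htail m)).trans_eq ?_))
    rw [Finset.card_range, nsmul_eq_mul]
    push_cast
    ring
  filter_upwards [ae_eventually_notMem_of_le_ofReal ((summable_pow_mul_exp_neg_mul_pow zero_le_two
    (by positivity) hq).mul_left 2) hunion] with ω hω
  obtain ⟨N, hN⟩ := eventually_atTop.1 hω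
  refine ⟨N, fun m hm k => ?_⟩
  rcases lt_or_ge k (2 ^ m) with hk | hk
  · by_contra! h
    exact hN m hm (mem_biUnion (Finset.mem_coe.2 (Finset.mem_range.2 hk)) h.le)
  · rw [incr_eq_zero hk, abs_zero]
    positivity

lemma HasGaussianIncrements.exists_measure_abs_incr_lt_le (hμ : HasGaussianIncrements H μ)
    (hr0 : 0 ≤ r) : ∃ K, ∀ m, ∀ j < 2 ^ m, μ {ω | |incr (2 ^ m) j ω| < r ^ m} ≤
      ENNReal.ofReal (K * (r / (1 / 2 : ℝ) ^ H) ^ m) := by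
  obtain ⟨c, hc, _, -, hmap⟩ := hμ.exists_map_incr_two_pow
  refine ⟨(√c)⁻¹, fun m j hj => ?_⟩
  set s : ℝ := (1 / 2 : ℝ) ^ H
  have : 0 < s := by positivity
  obtain ⟨v, hv, hcv, -⟩ := hmap m j hj
  have hvar : 0 < c * (s ^ m) ^ 2 := by positivity
  have hv0 : v ≠ 0 := NNReal.coe_ne_zero.1 (hvar.trans_le hcv).ne'
  have hsd : √c * s ^ m ≤ √v := by
    rw [← Real.sqrt_sq (show 0 ≤ s ^ m by positivity), ← Real.sqrt_mul hc.le]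
    exact Real.sqrt_le_sqrt hcv
  calc μ {ω | |incr (2 ^ m) j ω| < r ^ m} ≤ μ (incr (2 ^ m) j ⁻¹' Icc (-r ^ m) (r ^ m)) :=
        measure_mono fun ω hω => abs_le.1 (le_of_lt hω)
    _ ≤ ENNReal.ofReal ((r ^ m - -r ^ m) / (2 * √v)) := by
        rw [← Measure.map_apply (measurable_incr _ _) measurableSet_Icc, hv]
        exact gaussianReal_Icc_le 0 hv0 _ _
    _ ≤ ENNReal.ofReal ((√c)⁻¹ * (r / s) ^ m) := by
        refine ENNReal.ofReal_le_ofReal ?_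
        rw [sub_neg_eq_add, ← two_mul, mul_div_mul_left _ _ two_ne_zero, div_pow, ← div_eq_inv_mul,
          div_div, mul_comm (s ^ m)]
        gcongr

lemma HasGaussianIncrements.ae_dyadicRough (hμ : HasGaussianIncrements H μ) (hr0 : 0 ≤ r)
    (hr : r < (1 / 2 : ℝ) ^ H) : ∀ᵐ ω ∂μ, DyadicRough r ω := by
  classical
  obtain ⟨K, hK⟩ := hμ.exists_measure_abs_incr_lt_le hr0
  set s : ℝ := (1 / 2 : ℝ) ^ H
  have hs0 : 0 < s := by positivity
  have hfew : ∀ m, μ {ω | Fintype.card (Fin (2 ^ m)) ≤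
      2 * (Finset.univ.filter fun j : Fin (2 ^ m) => ω ∈ {ω | |incr (2 ^ m) j ω| < r ^ m}).card} ≤
      ENNReal.ofReal (2 * K * (r / s) ^ m) := fun m => by
    refine (measure_card_le_two_mul_card_le (p := ENNReal.ofReal (K * (r / s) ^ m))
      (S := fun j : Fin (2 ^ m) => {ω | |incr (2 ^ m) j ω| < r ^ m}) (fun j => ?_)
      fun j => hK m j j.2).trans_eq ?_
    · exact measurableSet_lt (measurable_incr _ _).abs measurable_const
    · rw [mul_assoc, ENNReal.ofReal_mul zero_le_two, ENNReal.ofReal_ofNat]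
  filter_upwards [ae_eventually_notMem_of_le_ofReal ((summable_geometric_of_lt_one (by positivity)
    ((div_lt_one hs0).2 hr)).mul_left (2 * K)) hfew] with ω hω
  filter_upwards [hω] with m hm
  have hsplit := Finset.card_filter_add_card_filter_not (s := Finset.univ)
    fun j : Fin (2 ^ m) => r ^ m ≤ |incr (2 ^ m) j ω|
  simp only [not_le, Finset.card_univ, Fintype.card_fin] at hm hsplit ⊢
  omega

end HasGaussianIncrements

/-! ### Independence of the increments and the bridges of Brownian motion -/

section Wiener

variable {W : Measure PathSpace} {n : ℕ}

lemma IsWienerMeasure.covariance_incr_incr_eq_zero (hW : IsWienerMeasure W) {i j : ℕ}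
    (hij : i ≠ j) : cov[incr n i, incr n j; W] = 0 := by
  wlog hlt : i < j generalizing i j
  · rw [ProbabilityTheory.covariance_comm]
    exact this hij.symm (by omega)
  have hmono := gridPt_monotone n
  exact hW.covariance_coord_sub_of_le (hmono i.le_succ) (hmono hlt) (hmono j.le_succ)

lemma gridFloor_le (n : ℕ) (t : unitInterval) : gridFloor n t ≤ t := by
  refine Subtype.coe_le_coe.1 ?_
  rw [coe_gridFloor]
  exact div_le_of_le_mul₀ n.cast_nonneg t.2.1
    ((Nat.floor_le (mul_nonneg n.cast_nonneg t.2.1)).trans_eq (mul_comm _ _))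

lemma le_gridPt_floor_add_one {t : unitInterval} (h : ⌊n * (t : ℝ)⌋₊ < n) :
    t ≤ gridPt n (⌊n * (t : ℝ)⌋₊ + 1) := by
  have hn : (0 : ℝ) < n := Nat.cast_pos.2 (by omega)
  refine Subtype.coe_le_coe.1 ?_
  rw [coe_gridPt h, le_div_iff₀ hn, mul_comm, Nat.cast_add_one]
  exact (Nat.lt_floor_add_one _).le

/- On each cell `s ↦ min s (i / n)` is affine, hence equal to its interpolation. -/
lemma IsWienerMeasure.covariance_bridge_coord_gridPt (hW : IsWienerMeasure W) (t : unitInterval)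
    {i : ℕ} (hi : i ≤ n) : cov[bridge n t, coord (gridPt n i); W] = 0 := by
  have := hW.isProbabilityMeasure
  have hL := fun s => IsGaussianProcess.memLp_two hW (coord_mem_coordSpan s)
  have hL' := IsGaussianProcess.memLp_two hW (incr_mem_coordSpan n ⌊n * (t : ℝ)⌋₊)
  rw [bridge, interp, ProbabilityTheory.covariance_sub_left (hL _)
    ((hL _).add (hL'.const_smul _)) (hL _), ProbabilityTheory.covariance_add_left (hL _)
    (hL'.const_smul _) (hL _), ProbabilityTheory.covariance_smul_left, incr,
    ProbabilityTheory.covariance_sub_left (hL _) (hL _) (hL _)]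
  simp only [hW.covariance_coord]
  have hfloor : (gridFloor n t : ℝ) ≤ t := gridFloor_le n t
  rw [gridFloor] at *
  rcases le_or_gt i ⌊n * (t : ℝ)⌋₊ with h | h
  · have hik : (gridPt n i : ℝ) ≤ gridPt n ⌊n * (t : ℝ)⌋₊ := gridPt_monotone n h
    have hik' : (gridPt n i : ℝ) ≤ gridPt n (⌊n * (t : ℝ)⌋₊ + 1) :=
      gridPt_monotone n (h.trans (Nat.le_succ _))
    rw [min_eq_right hik, min_eq_right hik', min_eq_right (hik.trans hfloor)]
    ring
  · have hkn := h.trans_le hi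
    have hn : (n : ℝ) ≠ 0 := Nat.cast_ne_zero.2 (by omega)
    have hki : (gridPt n (⌊n * (t : ℝ)⌋₊ + 1) : ℝ) ≤ gridPt n i := gridPt_monotone n h
    have hceil : (t : ℝ) ≤ gridPt n (⌊n * (t : ℝ)⌋₊ + 1) := le_gridPt_floor_add_one hkn
    rw [min_eq_left hki, min_eq_left (hceil.trans hki),
      min_eq_left ((hfloor.trans hceil).trans hki), coe_gridPt hkn.le, coe_gridPt hkn]
    push_cast
    field_simp
    ring

lemma IsWienerMeasure.covariance_bridge_incr (hW : IsWienerMeasure W) (t : unitInterval) {j : ℕ}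
    (hj : j < n) : cov[bridge n t, incr n j; W] = 0 := by
  have := hW.isProbabilityMeasure
  have hL := fun s => IsGaussianProcess.memLp_two hW (coord_mem_coordSpan s)
  rw [incr, ProbabilityTheory.covariance_sub_right
    (IsGaussianProcess.memLp_two hW (bridge_mem_coordSpan n t)) (hL _) (hL _),
    hW.covariance_bridge_coord_gridPt t hj, hW.covariance_bridge_coord_gridPt t hj.le, sub_zero]

lemma IsWienerMeasure.map_incr (hW : IsWienerMeasure W) {j : ℕ} (hj : j < n) :
    W.map (incr n j) = gaussianReal 0 (n : ℝ≥0)⁻¹ := by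
  rw [incr, hW.map_coord_sub, coe_gridPt hj, coe_gridPt hj.le, ← sub_div, Nat.cast_add_one,
    add_sub_cancel_left, abs_of_nonneg (by positivity), one_div,
    Real.toNNReal_inv, Real.toNNReal_natCast]

lemma IsWienerMeasure.iIndepFun_incr (hW : IsWienerMeasure W) :
    iIndepFun (fun (j : Fin n) => incr n j) W := by
  have h := ProbabilityTheory.IsGaussianProcess.iIndepFun_of_covariance_eq_zero
    (S := fun _ : Fin n => Unit) (X := fun j _ => incr n j) (P := W)
    (IsGaussianProcess.isGaussianProcess_of_mem_coordSpan hW fun p => incr_mem_coordSpan n p.1)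
    (fun j _ => (measurable_incr n j).aemeasurable)
    (fun _ _ hij _ _ => hW.covariance_incr_incr_eq_zero (Fin.val_ne_of_ne hij))
  exact h.comp (fun _ x => x ()) fun _ => measurable_pi_apply ()

lemma IsWienerMeasure.measure_iInter_incr (hW : IsWienerMeasure W) (s : Finset (Fin n))
    {A : Fin n → Set ℝ} (hA : ∀ j, MeasurableSet (A j)) :
    W (⋂ j ∈ s, incr n j ⁻¹' A j) = ∏ j ∈ s, gaussianReal 0 (n : ℝ≥0)⁻¹ (A j) := by
  rw [hW.iIndepFun_incr.measure_inter_preimage_eq_mul s fun j _ => hA j]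
  exact Finset.prod_congr rfl fun j _ => by
    rw [← hW.map_incr j.2, Measure.map_apply (measurable_incr n j) (hA j)]

lemma IsWienerMeasure.measure_iInter_bridge_inter_iInter_incr (hW : IsWienerMeasure W) {ι : Type*}
    [Countable ι] (t : ι → unitInterval) {B : ι → Set ℝ} {A : Fin n → Set ℝ}
    (hB : ∀ i, MeasurableSet (B i)) (hA : ∀ j, MeasurableSet (A j)) :
    W ((⋂ i, bridge n (t i) ⁻¹' B i) ∩ ⋂ j : Fin n, incr n j ⁻¹' A j) =
      W (⋂ i, bridge n (t i) ⁻¹' B i) * ∏ j : Fin n, gaussianReal 0 (n : ℝ≥0)⁻¹ (A j) := by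
  have hindep := ProbabilityTheory.IsGaussianProcess.indepFun_of_covariance_eq_zero
    (X := fun i => bridge n (t i)) (Y := fun j : Fin n => incr n j) (P := W)
    (IsGaussianProcess.isGaussianProcess_of_mem_coordSpan hW (by
      rintro (i | j)
      · exact bridge_mem_coordSpan n (t i)
      · exact incr_mem_coordSpan n j))
    (fun i => (continuous_of_mem_coordSpan (bridge_mem_coordSpan n _)).aemeasurable)
    (fun j => (measurable_incr n j).aemeasurable)
    (fun i j => hW.covariance_bridge_incr (t i) j.2)
  have hmul := hindep.measure_inter_preimage_eq_mul (univ.pi B) (univ.pi A)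
    (MeasurableSet.univ_pi hB) (MeasurableSet.univ_pi hA)
  have hbridge : (fun ω i => bridge n (t i) ω) ⁻¹' univ.pi B = ⋂ i, bridge n (t i) ⁻¹' B i := by
    ext
    simp
  have hincr : (fun ω (j : Fin n) => incr n j ω) ⁻¹' univ.pi A =
      ⋂ j : Fin n, incr n j ⁻¹' A j := by
    ext
    simp
  rw [hbridge, hincr] at hmul
  rw [hmul]
  congr 1
  simpa using hW.measure_iInter_incr Finset.univ hA

end Wiener

/-! ### The Wiener measure of balls -/

section Wiener

variable {W : Measure PathSpace}

lemma IsWienerMeasure.measure_bridge_mul_prod_le_measure_closedBall (hW : IsWienerMeasure W)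
    {n : ℕ} (s D : ℝ) {D' : ℝ} {ωb : PathSpace} (hωb : ∀ t, |bridge n t ωb| ≤ D') :
    W {ω | ∀ t, |bridge n t ω| ≤ D} *
        ∏ j : Fin n, gaussianReal 0 (n : ℝ≥0)⁻¹ (Icc (incr n j ωb - s) (incr n j ωb + s)) ≤
      W (closedBall ωb (D + D' + n * s)) := by
  set t := TopologicalSpace.denseSeq unitInterval
  have hbridge : {ω | ∀ t, |bridge n t ω| ≤ D} ⊆ ⋂ i, bridge n (t i) ⁻¹' Icc (-D) D :=
    fun ω hω => mem_iInter.2 fun i => abs_le.1 (hω (t i))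
  have hclose : ((⋂ i, bridge n (t i) ⁻¹' Icc (-D) D) ∩
      ⋂ j : Fin n, incr n j ⁻¹' Icc (incr n j ωb - s) (incr n j ωb + s)) ⊆
        closedBall ωb (D + D' + n * s) := by
    rintro ω ⟨hb, hi⟩
    rw [mem_iInter] at hb hi
    refine mem_closedBall.2 (dist_le_of_abs_bridge_le_of_abs_incr_sub_le
      (TopologicalSpace.denseRange_denseSeq unitInterval) (fun i => abs_le.2 (hb i))
      (fun i => hωb (t i)) fun j hj => ?_)
    rw [abs_sub_comm]
    exact abs_sub_le_iff.2 ⟨by linarith [(hi ⟨j, hj⟩).1], by linarith [(hi ⟨j, hj⟩).2]⟩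
  refine (mul_le_mul_left (measure_mono hbridge) _).trans ?_
  rw [← hW.measure_iInter_bridge_inter_iInter_incr t (fun _ => measurableSet_Icc)
    fun _ => measurableSet_Icc]
  exact measure_mono hclose

/- The factor `(r / 2) ^ m` lost through the Gaussian density is absorbed by the exponential of the
growing quantity `(2 * r ^ 2) ^ m`. -/
lemma eventually_exp_le_gaussianReal_Icc {r : ℝ} (hr0 : 0 < r)
    (hr : 1 / 2 < r ^ 2) : ∀ᶠ m : ℕ in atTop, ∀ a : ℝ, |a| ≤ r ^ m →
      ENNReal.ofReal (Real.exp (-(3 * (2 * r ^ 2) ^ m))) ≤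
        gaussianReal 0 ((2 ^ m : ℕ) : ℝ≥0)⁻¹ (Icc (a - (r / 2) ^ m) (a + (r / 2) ^ m)) := by
  have hsum := summable_pow_mul_exp_neg_mul_pow (b := 2 / r) (by positivity) one_pos
    (show 1 < 2 * r ^ 2 by linarith)
  filter_upwards [hsum.tendsto_atTop_zero.eventually_le_const one_half_pos] with m hm a ha
  refine (ENNReal.ofReal_le_ofReal ?_).trans (le_gaussianReal_Icc (by positivity) a ((r / 2) ^ m))
  set v : ℝ≥0 := ((2 ^ m : ℕ) : ℝ≥0)⁻¹ with hv
  have : 0 < (v : ℝ) := by positivity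
  have hv1 : √(v : ℝ) ≤ 1 := Real.sqrt_le_one.2 (by
    rw [hv]
    push_cast
    exact inv_le_one_of_one_le₀ (one_le_pow₀ one_le_two))
  have hprefactor : Real.exp (-(2 * r ^ 2) ^ m) ≤ (r / 2) ^ m / (2 * √v) := by
    calc Real.exp (-(2 * r ^ 2) ^ m)
        = (r / 2) ^ m * ((2 / r) ^ m * Real.exp (-(1 * (2 * r ^ 2) ^ m))) := by
          rw [← mul_assoc, ← mul_pow, div_mul_div_cancel₀ two_ne_zero, div_self hr0.ne', one_pow,
            one_mul, one_mul]
      _ ≤ (r / 2) ^ m * (1 / 2) := by gcongr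
      _ ≤ (r / 2) ^ m / (2 * √v) := by
          rw [mul_one_div]
          gcongr
          linarith
  have hexponent : (|a| + (r / 2) ^ m) ^ 2 / (2 * v) ≤ 2 * (2 * r ^ 2) ^ m := by
    have hhalf : (r / 2) ^ m ≤ r ^ m := pow_le_pow_left₀ (by positivity) (by linarith) m
    calc (|a| + (r / 2) ^ m) ^ 2 / (2 * v) ≤ (r ^ m + r ^ m) ^ 2 / (2 * v) := by gcongr
      _ = 2 * (2 * r ^ 2) ^ m := by
          rw [hv]
          push_cast
          field_simp
          ring
  calc Real.exp (-(3 * (2 * r ^ 2) ^ m))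
      = Real.exp (-(2 * r ^ 2) ^ m) * Real.exp (-(2 * (2 * r ^ 2) ^ m)) := by
        rw [← Real.exp_add]
        ring_nf
    _ ≤ (r / 2) ^ m / (2 * √v) * Real.exp (-(|a| + (r / 2) ^ m) ^ 2 / (2 * v)) := by
        gcongr
        rw [neg_div]
        exact neg_le_neg hexponent

lemma IsWienerMeasure.exists_measure_dyadicHolder_ne_zero (hW : IsWienerMeasure W) {r : ℝ}
    (hr0 : 0 < r) (hr : 1 / 2 < r ^ 2) : ∃ N, W {ω | DyadicHolder r N ω} ≠ 0 := by
  have := hW.isProbabilityMeasure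
  have hr' : (1 / 2 : ℝ) ^ (1 / 2 : ℝ) < r := by
    rw [← Real.sqrt_eq_rpow]
    exact (Real.sqrt_lt' hr0).2 hr
  by_contra! h
  have hnever : ∀ᵐ ω ∂W, ∀ N, ¬ DyadicHolder r N ω :=
    ae_all_iff.2 fun N => measure_eq_zero_iff_ae_notMem.1 (h N)
  have hholder := hW.hasGaussianIncrements.ae_exists_dyadicHolder hr'
  obtain ⟨ω, ⟨N, hN⟩, hω⟩ := (hholder.and hnever).exists
  exact hω N hN

lemma IsWienerMeasure.eventually_exp_le_measureReal_closedBall (hW : IsWienerMeasure W) {r : ℝ}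
    (hr0 : 0 < r) (hr1 : r < 1) (hr : 1 / 2 < r ^ 2) {ωb : PathSpace} {N : ℕ}
    (hωb : DyadicHolder r N ωb) : ∀ᶠ m : ℕ in atTop,
      Real.exp (-(4 * (4 * r ^ 2) ^ m)) ≤ W.real (closedBall ωb ((2 / (1 - r) + 1) * r ^ m)) := by
  have := hW.isProbabilityMeasure
  obtain ⟨N', hN'⟩ := hW.exists_measure_dyadicHolder_ne_zero hr0 hr
  set p := W.real {ω | DyadicHolder r N' ω}
  have hp : 0 < p := ENNReal.toReal_pos hN' (measure_ne_top _ _)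
  have hsum := summable_pow_mul_exp_neg_mul_pow zero_le_one one_pos
    (show 1 < 4 * r ^ 2 by linarith)
  filter_upwards [eventually_ge_atTop N, eventually_ge_atTop N',
    eventually_exp_le_gaussianReal_Icc hr0 hr,
    hsum.tendsto_atTop_zero.eventually_le_const hp] with m hmN hmN' hincr hpm
  rw [one_pow, one_mul, one_mul] at hpm
  have hbridge : ENNReal.ofReal (Real.exp (-(4 * r ^ 2) ^ m)) ≤
      W {ω | ∀ t, |bridge (2 ^ m) t ω| ≤ r ^ m / (1 - r)} :=
    (ENNReal.ofReal_le_ofReal hpm).trans ((ofReal_measureReal (measure_ne_top _ _)).trans_le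
      (measure_mono fun ω hω => DyadicHolder.abs_bridge_le hω hr0.le hr1 hmN'))
  have hprod := Finset.pow_card_le_prod Finset.univ _ _
    fun (j : Fin (2 ^ m)) _ => hincr (incr (2 ^ m) j ωb) (hωb m hmN j)
  rw [Finset.card_univ, Fintype.card_fin] at hprod
  have hball := (mul_le_mul' hbridge hprod).trans
    (hW.measure_bridge_mul_prod_le_measure_closedBall _ _ (hωb.abs_bridge_le hr0.le hr1 hmN))
  have hexp : Real.exp (-(4 * (4 * r ^ 2) ^ m)) =
      Real.exp (-(4 * r ^ 2) ^ m) * Real.exp (-(3 * (2 * r ^ 2) ^ m)) ^ 2 ^ m := by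
    rw [← Real.exp_nat_mul, ← Real.exp_add, show 4 * r ^ 2 = 2 * (2 * r ^ 2) by ring,
      mul_pow 2 (2 * r ^ 2)]
    push_cast
    ring_nf
  have hradius : (2 / (1 - r) + 1) * r ^ m =
      r ^ m / (1 - r) + r ^ m / (1 - r) + (2 ^ m : ℕ) * (r / 2) ^ m := by
    push_cast
    rw [div_pow, mul_div_cancel₀ _ (by positivity)]
    ring
  rw [hexp, hradius]
  refine (ENNReal.ofReal_le_iff_le_toReal (measure_ne_top _ _)).1 ?_
  rwa [ENNReal.ofReal_mul (Real.exp_nonneg _), ENNReal.ofReal_pow (Real.exp_nonneg _)]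

lemma ball_subset_iInter_incr {n : ℕ} (ωb : PathSpace) (ε : ℝ) (s : Finset (Fin n)) :
    ball ωb ε ⊆ ⋂ j ∈ s, incr n j ⁻¹' Icc (incr n j ωb - 2 * ε) (incr n j ωb + 2 * ε) := by
  intro ω hω
  refine mem_iInter₂.2 fun j _ => ?_
  have hcoord : ∀ t, |coord t ω - coord t ωb| ≤ ε := fun t =>
    (ContinuousMap.dist_apply_le_dist (f := ω.1) (g := ωb.1) t).trans (mem_ball.1 hω).le
  have hright := abs_le.1 (hcoord (gridPt n (j + 1)))
  have hleft := abs_le.1 (hcoord (gridPt n j))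
  simp only [mem_preimage, mem_Icc, incr, Pi.sub_apply]
  constructor <;> linarith

lemma IsWienerMeasure.measureReal_ball_le_exp (hW : IsWienerMeasure W) {n : ℕ} {ωb : PathSpace}
    {ε x : ℝ} {s : Finset (Fin n)} (h : ∀ j ∈ s, gaussianReal 0 (n : ℝ≥0)⁻¹
      (Icc (incr n j ωb - 2 * ε) (incr n j ωb + 2 * ε)) ≤ ENNReal.ofReal (Real.exp (-x))) :
    W.real (ball ωb ε) ≤ Real.exp (-(s.card * x)) := by
  have hprod := (measure_mono (ball_subset_iInter_incr ωb ε s)).trans_eq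
    (hW.measure_iInter_incr s fun _ => measurableSet_Icc)
  refine ENNReal.toReal_le_of_le_ofReal (Real.exp_nonneg _)
    (hprod.trans ((Finset.prod_le_pow_card s _ _ h).trans_eq ?_))
  rw [← ENNReal.ofReal_pow (Real.exp_nonneg _), ← Real.exp_nat_mul, mul_neg]

lemma IsWienerMeasure.measureReal_ball_le (hW : IsWienerMeasure W) {n : ℕ} (hn : n ≠ 0)
    (ωb : PathSpace) {ε : ℝ} (hε : n * (4 * ε) ^ 2 ≤ 1) :
    W.real (ball ωb ε) ≤ Real.exp (-(n * (1 / 2))) := by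
  suffices h : ∀ j ∈ (Finset.univ : Finset (Fin n)), gaussianReal 0 (n : ℝ≥0)⁻¹
      (Icc (incr n j ωb - 2 * ε) (incr n j ωb + 2 * ε)) ≤ ENNReal.ofReal (Real.exp (-(1 / 2))) by
    simpa using hW.measureReal_ball_le_exp h
  intro j _
  refine (gaussianReal_Icc_le 0 (by positivity) _ _).trans (ENNReal.ofReal_le_ofReal ?_)
  have hsd : 4 * ε ≤ √(((n : ℝ≥0)⁻¹ : ℝ≥0) : ℝ) := by
    refine Real.le_sqrt_of_sq_le ?_
    push_cast
    rwa [← one_div, le_div_iff₀ (by positivity), mul_comm]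
  calc (incr n j ωb + 2 * ε - (incr n j ωb - 2 * ε)) / (2 * √(((n : ℝ≥0)⁻¹ : ℝ≥0) : ℝ))
      ≤ 1 / 2 := by
        rw [div_le_iff₀ (by positivity)]
        linarith
    _ ≤ Real.exp (-(1 / 2)) := by linarith [Real.add_one_le_exp (-(1 / 2) : ℝ)]

lemma IsWienerMeasure.measureReal_ball_le_of_le_abs_incr (hW : IsWienerMeasure W) {n : ℕ}
    {ωb : PathSpace} {δ : ℝ} (hδ : 0 ≤ δ) {s : Finset (Fin n)}
    (hs : ∀ j ∈ s, δ ≤ |incr n j ωb|) :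
    W.real (ball ωb (δ / 4)) ≤ Real.exp (-(s.card * (n * δ ^ 2 / 8))) := by
  refine hW.measureReal_ball_le_exp fun j hj =>
    (gaussianReal_Icc_le_exp _ (x := δ / 2) (by positivity) (by linarith [hs j hj])).trans_eq ?_
  congr 2
  push_cast
  field_simp
  ring

end Wiener

/-! ### From geometric scales to local orders -/

lemma eventually_nhdsGT_exists_mul_pow_near {r A : ℝ} (hr0 : 0 < r) (hr1 : r < 1) (hA : 0 < A)
    (N : ℕ) : ∀ᶠ ε : ℝ in 𝓝[>] 0, ∃ m ≥ N, A * r ^ (m + 1) < ε ∧ ε ≤ A * r ^ m := by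
  filter_upwards [Ioc_mem_nhdsGT (show 0 < A * r ^ N by positivity)] with ε ⟨hε0, hε⟩
  obtain ⟨m, hlt, hle⟩ := exists_nat_pow_near_of_lt_one (x := ε / (A * r ^ N)) (by positivity)
    (div_le_one_of_le₀ hε (by positivity)) hr0 hr1
  refine ⟨N + m, Nat.le_add_right _ _, ?_, ?_⟩
  · rwa [lt_div_iff₀ (by positivity), mul_comm, mul_assoc, ← pow_add] at hlt
  · rwa [div_le_iff₀ (by positivity), mul_comm, mul_assoc, ← pow_add] at hle

lemma eventually_nhdsGT_exp_le_of_monotone {f : ℝ → ℝ} (hf : Monotone f) {r κ A B : ℝ}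
    (hr0 : 0 < r) (hr1 : r < 1) (hκ : 0 ≤ κ) (hA : 0 < A) (hB : 0 ≤ B)
    (h : ∀ᶠ m : ℕ in atTop, Real.exp (-(B * (r ^ m) ^ (-κ))) ≤ f (A * r ^ m)) :
    ∀ᶠ ε in 𝓝[>] 0, Real.exp (-(B * (r / A) ^ (-κ) * ε ^ (-κ))) ≤ f ε := by
  obtain ⟨N, hN⟩ := eventually_atTop.1 h
  filter_upwards [eventually_nhdsGT_exists_mul_pow_near hr0 hr1 hA N, self_mem_nhdsWithin]
    with ε ⟨m, hm, hlt, hle⟩ (hε : 0 < ε)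
  refine le_trans ?_ ((hN (m + 1) (by lia)).trans (hf hlt.le))
  rw [mul_assoc, ← Real.mul_rpow (by positivity) hε.le]
  have hscale : r / A * ε ≤ r ^ (m + 1) := by
    rw [div_mul_eq_mul_div, div_le_iff₀ hA, pow_succ']
    nlinarith
  have hrpow := Real.rpow_le_rpow_of_nonpos (by positivity) hscale (neg_nonpos.2 hκ)
  gcongr

lemma eventually_nhdsGT_le_exp_of_monotone {f : ℝ → ℝ} (hf : Monotone f) {r κ A B : ℝ}
    (hr0 : 0 < r) (hr1 : r < 1) (hκ : 0 ≤ κ) (hA : 0 < A) (hB : 0 ≤ B)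
    (h : ∀ᶠ m : ℕ in atTop, f (A * r ^ m) ≤ Real.exp (-(B * (r ^ m) ^ (-κ)))) :
    ∀ᶠ ε in 𝓝[>] 0, f ε ≤ Real.exp (-(B * (1 / (A * r)) ^ (-κ) * ε ^ (-κ))) := by
  obtain ⟨N, hN⟩ := eventually_atTop.1 h
  filter_upwards [eventually_nhdsGT_exists_mul_pow_near hr0 hr1 hA N, self_mem_nhdsWithin]
    with ε ⟨m, hm, hlt, hle⟩ (hε : 0 < ε)
  refine ((hf hle).trans (hN m hm)).trans ?_
  rw [mul_assoc, ← Real.mul_rpow (by positivity) hε.le]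
  have hscale : r ^ m ≤ 1 / (A * r) * ε := by
    rw [div_mul_eq_mul_div, one_mul, le_div_iff₀ (by positivity)]
    rw [pow_succ] at hlt
    linarith
  have hrpow := Real.rpow_le_rpow_of_nonpos (by positivity) hscale (neg_nonpos.2 hκ)
  gcongr

lemma tendsto_log_mul_rpow_neg_div_neg_log {K : ℝ} (hK : 0 < K) (κ : ℝ) :
    Tendsto (fun ε : ℝ => ((Real.log (K * ε ^ (-κ)) / -Real.log ε : ℝ) : EReal)) (𝓝[>] 0)
      (𝓝 (κ : EReal)) := by
  refine (continuous_coe_real_ereal.tendsto _).comp ?_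
  have h := ((tendsto_neg_atBot_atTop.comp Real.tendsto_log_nhdsGT_zero).const_div_atTop
    (Real.log K)).add_const κ
  rw [zero_add] at h
  refine h.congr' ?_
  filter_upwards [Ioo_mem_nhdsGT one_pos] with ε hε
  have hlog : Real.log ε ≠ 0 := (Real.log_neg hε.1 hε.2).ne
  rw [Real.log_mul hK.ne' (Real.rpow_pos_of_pos hε.1 _).ne', Real.log_rpow hε.1]
  simp only [Function.comp_apply]
  field_simp
  ring

section LocalOrder

variable {μ : Measure PathSpace} {ω : PathSpace} {K κ : ℝ}

lemma upperLocOrd_le_of_eventually_exp_le [IsProbabilityMeasure μ] (hK : 0 < K) (hκ : 0 < κ)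
    (h : ∀ᶠ ε in 𝓝[>] 0, Real.exp (-(K * ε ^ (-κ))) ≤ μ.real (ball ω ε)) :
    upperLocOrd μ ω ≤ κ := by
  rw [← (tendsto_log_mul_rpow_neg_div_neg_log hK κ).limsup_eq]
  refine limsup_le_limsup ?_
  filter_upwards [h, Ioo_mem_nhdsGT one_pos, ((tendsto_rpow_neg_nhdsGT_zero
    (neg_neg_of_pos hκ)).const_mul_atTop hK).eventually_ge_atTop 1] with ε hle hε hlarge
  rw [← measureReal_def, EReal.coe_le_coe_iff]
  have hpos := (Real.exp_pos _).trans_le hle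
  have hlog := (Real.le_log_iff_exp_le hpos).2 hle
  refine div_le_div_of_nonneg_right ?_ (neg_nonneg.2 (Real.log_neg hε.1 hε.2).le)
  rcases (neg_nonneg.2 (Real.log_nonpos hpos.le measureReal_le_one)).eq_or_lt with hzero | hzero
  · rw [← hzero, Real.log_zero]
    exact Real.log_nonneg hlarge
  · exact Real.log_le_log hzero (by linarith)

lemma le_lowerLocOrd_of_eventually_le_exp (hK : 0 < K)
    (hpos : ∀ᶠ ε in 𝓝[>] 0, 0 < μ.real (ball ω ε))
    (h : ∀ᶠ ε in 𝓝[>] 0, μ.real (ball ω ε) ≤ Real.exp (-(K * ε ^ (-κ)))) :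
    κ ≤ lowerLocOrd μ ω := by
  rw [← (tendsto_log_mul_rpow_neg_div_neg_log hK κ).liminf_eq]
  refine liminf_le_liminf ?_
  filter_upwards [h, hpos, Ioo_mem_nhdsGT one_pos] with ε hle hpos hε
  rw [← measureReal_def, EReal.coe_le_coe_iff]
  have hlog := (Real.log_le_iff_le_exp hpos).2 hle
  have := Real.rpow_pos_of_pos hε.1 (-κ)
  refine div_le_div_of_nonneg_right ?_ (neg_nonneg.2 (Real.log_neg hε.1 hε.2).le)
  exact Real.log_le_log (by positivity) (by linarith)

lemma lowerLocOrd_le_upperLocOrd : lowerLocOrd μ ω ≤ upperLocOrd μ ω := liminf_le_limsup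

lemma monotone_measureReal_ball [IsFiniteMeasure μ] : Monotone fun ε => μ.real (ball ω ε) :=
  fun _ _ h => measureReal_mono (ball_subset_ball h)

end LocalOrder

/-! ### Local orders of the Wiener measure -/

lemma half_rpow_sq (a : ℝ) : ((1 / 2 : ℝ) ^ a) ^ 2 = (1 / 2 : ℝ) ^ (2 * a) := by
  rw [← Real.rpow_mul_natCast (by norm_num), mul_comm, Nat.cast_ofNat]

lemma half_rpow_lt_one {a : ℝ} (ha : 0 < a) : (1 / 2 : ℝ) ^ a < 1 :=
  Real.rpow_lt_one (by norm_num) (by norm_num) ha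

lemma half_lt_half_rpow_sq {a : ℝ} (ha : a < 1 / 2) : 1 / 2 < ((1 / 2 : ℝ) ^ a) ^ 2 := by
  rw [half_rpow_sq]
  exact Real.self_lt_rpow_of_lt_one (by norm_num) (by norm_num) (by linarith)

lemma half_rpow_pow_rpow_neg {a : ℝ} (ha : a ≠ 0) (m : ℕ) :
    (((1 / 2 : ℝ) ^ a) ^ m) ^ (-(2 / a - 2)) = (4 * ((1 / 2 : ℝ) ^ a) ^ 2) ^ m := by
  have h : ((1 / 2 : ℝ) ^ a) ^ (-(2 / a - 2)) = 4 * ((1 / 2 : ℝ) ^ a) ^ 2 := by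
    rw [half_rpow_sq, ← Real.rpow_mul (by norm_num),
      show a * -(2 / a - 2) = (-2 : ℤ) + 2 * a by field_simp; push_cast; ring,
      Real.rpow_add (by norm_num), Real.rpow_intCast]
    norm_num
  rw [← Real.rpow_pow_comm (by positivity), h]

lemma le_lowerLocOrd_of_eventually_geometric_le_exp {μ : Measure PathSpace} [IsFiniteMeasure μ]
    {ω : PathSpace} {a A B : ℝ} (hA : 0 < A) (hB : 0 < B) (ha0 : 0 < a) (ha1 : a ≤ 1)
    (hpos : ∀ᶠ ε in 𝓝[>] 0, 0 < μ.real (ball ω ε))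
    (h : ∀ᶠ m : ℕ in atTop, μ.real (ball ω (A * ((1 / 2) ^ a) ^ m)) ≤
      Real.exp (-(B * (4 * ((1 / 2 : ℝ) ^ a) ^ 2) ^ m))) :
    ((2 / a - 2 : ℝ) : EReal) ≤ lowerLocOrd μ ω := by
  have hκ : 0 ≤ 2 / a - 2 := by
    rw [sub_nonneg, le_div_iff₀ ha0]
    linarith
  simp_rw [← half_rpow_pow_rpow_neg ha0.ne'] at h
  exact le_lowerLocOrd_of_eventually_le_exp (by positivity) hpos
    (eventually_nhdsGT_le_exp_of_monotone monotone_measureReal_ball (by positivity)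
      (half_rpow_lt_one ha0) hκ hA hB.le h)

section Wiener

variable {W : Measure PathSpace} {ωb : PathSpace} {a : ℝ} {N : ℕ}

lemma IsWienerMeasure.eventually_exp_le_measureReal_ball (hW : IsWienerMeasure W) (ha0 : 0 < a)
    (ha : a < 1 / 2) (hωb : DyadicHolder ((1 / 2) ^ a) N ωb) : ∃ K > 0, ∀ᶠ ε in 𝓝[>] 0,
      Real.exp (-(K * ε ^ (-(2 / a - 2)))) ≤ W.real (ball ωb ε) := by
  have := hW.isProbabilityMeasure
  have hr0 : 0 < (1 / 2 : ℝ) ^ a := by positivity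
  have hr1 := half_rpow_lt_one ha0
  have hκ : 0 ≤ 2 / a - 2 := by
    rw [sub_nonneg, le_div_iff₀ ha0]
    linarith
  have hA : 0 < 2 / (1 - (1 / 2 : ℝ) ^ a) + 1 := by
    have := sub_pos.2 hr1
    positivity
  refine ⟨_, ?_, eventually_nhdsGT_exp_le_of_monotone monotone_measureReal_ball hr0 hr1 hκ
    (mul_pos two_pos hA) (B := 4) (by norm_num) ?_⟩
  · positivity
  filter_upwards [hW.eventually_exp_le_measureReal_closedBall hr0 hr1 (half_lt_half_rpow_sq ha)
    hωb] with m hm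
  rw [half_rpow_pow_rpow_neg ha0.ne']
  refine hm.trans (measureReal_mono (closedBall_subset_ball ?_))
  rw [mul_assoc]
  exact lt_two_mul_self (by positivity)

lemma IsWienerMeasure.eventually_measureReal_ball_pos (hW : IsWienerMeasure W) (ha0 : 0 < a)
    (ha : a < 1 / 2) (hωb : DyadicHolder ((1 / 2) ^ a) N ωb) :
    ∀ᶠ ε in 𝓝[>] 0, 0 < W.real (ball ωb ε) := by
  obtain ⟨K, -, hK⟩ := hW.eventually_exp_le_measureReal_ball ha0 ha hωb
  exact hK.mono fun ε hε => (Real.exp_pos _).trans_le hε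

lemma IsWienerMeasure.upperLocOrd_le (hW : IsWienerMeasure W) (ha0 : 0 < a)
    (ha : a < 1 / 2) (hωb : DyadicHolder ((1 / 2) ^ a) N ωb) :
    upperLocOrd W ωb ≤ ((2 / a - 2 : ℝ) : EReal) := by
  have := hW.isProbabilityMeasure
  obtain ⟨K, hK0, hK⟩ := hW.eventually_exp_le_measureReal_ball ha0 ha hωb
  refine upperLocOrd_le_of_eventually_exp_le hK0 ?_ hK
  rw [sub_pos, lt_div_iff₀ ha0]
  linarith

lemma IsWienerMeasure.le_lowerLocOrd_of_dyadicRough (hW : IsWienerMeasure W) (ha0 : 0 < a)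
    (ha1 : a ≤ 1) (hpos : ∀ᶠ ε in 𝓝[>] 0, 0 < W.real (ball ωb ε))
    (hωb : DyadicRough ((1 / 2) ^ a) ωb) : ((2 / a - 2 : ℝ) : EReal) ≤ lowerLocOrd W ωb := by
  have := hW.isProbabilityMeasure
  refine le_lowerLocOrd_of_eventually_geometric_le_exp (A := 1 / 4) (B := 1 / 16) (by norm_num)
    (by norm_num) ha0 ha1 hpos ?_
  filter_upwards [hωb] with m hcard
  set r := (1 / 2 : ℝ) ^ a
  set s := Finset.univ.filter fun j : Fin (2 ^ m) => r ^ m ≤ |incr (2 ^ m) j ωb|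
  have hball := hW.measureReal_ball_le_of_le_abs_incr (δ := r ^ m) (s := s) (by positivity)
    fun j hj => (Finset.mem_filter.1 hj).2
  rw [div_mul_eq_mul_div, one_mul]
  refine hball.trans (Real.exp_le_exp.2 (neg_le_neg ?_))
  have hcard' : (2 : ℝ) ^ m ≤ 2 * s.card := mod_cast hcard
  calc 1 / 16 * (4 * r ^ 2) ^ m = 2 ^ m / 2 * (2 ^ m * (r ^ m) ^ 2 / 8) := by
        rw [show (4 : ℝ) * r ^ 2 = 2 * 2 * r ^ 2 by norm_num, mul_pow, mul_pow]
        ring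
    _ ≤ s.card * ((2 ^ m : ℕ) * (r ^ m) ^ 2 / 8) := by
        push_cast
        gcongr
        linarith

lemma IsWienerMeasure.two_le_lowerLocOrd (hW : IsWienerMeasure W)
    (hpos : ∀ᶠ ε in 𝓝[>] 0, 0 < W.real (ball ωb ε)) :
    ((2 : ℝ) : EReal) ≤ lowerLocOrd W ωb := by
  rw [show (2 : ℝ) = 2 / (1 / 2) - 2 by norm_num]
  have := hW.isProbabilityMeasure
  refine le_lowerLocOrd_of_eventually_geometric_le_exp (A := 1 / 4) (B := 1 / 2) (by norm_num)
    (by norm_num) (by norm_num) (by norm_num) hpos (Eventually.of_forall fun m => ?_)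
  have hr : ((1 / 2 : ℝ) ^ (1 / 2 : ℝ)) ^ 2 = 1 / 2 := by
    rw [half_rpow_sq]
    norm_num
  refine (hW.measureReal_ball_le (n := 2 ^ m) (by positivity) ωb ?_).trans_eq ?_
  · rw [← mul_assoc, mul_one_div_cancel four_ne_zero, one_mul, pow_right_comm, hr]
    push_cast
    rw [← mul_pow]
    norm_num
  · rw [hr]
    norm_num
    ring_nf

end Wiener

/-! ### Local orders at typical paths -/

lemma tendsto_coe_two_div_sub_two {u : ℕ → ℝ} {κ : ℝ} (hκ : κ ≠ 0)
    (hu : Tendsto u atTop (𝓝 κ)) :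
    Tendsto (fun k => ((2 / u k - 2 : ℝ) : EReal)) atTop (𝓝 ((2 / κ - 2 : ℝ) : EReal)) :=
  (continuous_coe_real_ereal.tendsto _).comp ((tendsto_const_nhds.div hu hκ).sub_const 2)

section GaussianIncrements

variable {W μ : Measure PathSpace} {H : ℝ}

lemma HasGaussianIncrements.ae_exists_dyadicHolder_half_rpow (hμ : HasGaussianIncrements H μ)
    {a : ℝ} (haH : a < H) : ∀ᵐ ω ∂μ, ∃ N, DyadicHolder ((1 / 2) ^ a) N ω :=
  hμ.ae_exists_dyadicHolder (Real.rpow_lt_rpow_of_exponent_gt (by norm_num) (by norm_num) haH)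

lemma HasGaussianIncrements.ae_eventually_measureReal_ball_pos (hμ : HasGaussianIncrements H μ)
    (hH : 0 < H) (hW : IsWienerMeasure W) :
    ∀ᵐ ω ∂μ, ∀ᶠ ε in 𝓝[>] 0, 0 < W.real (ball ω ε) := by
  obtain ⟨a, ha0, ha⟩ := exists_between (lt_min hH one_half_pos)
  rw [lt_min_iff] at ha
  filter_upwards [hμ.ae_exists_dyadicHolder_half_rpow ha.1] with ω ⟨N, hω⟩
  exact hW.eventually_measureReal_ball_pos ha0 ha.2 hω

lemma HasGaussianIncrements.ae_upperLocOrd_le (hμ : HasGaussianIncrements H μ)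
    (hW : IsWienerMeasure W) {κ : ℝ} (hκ : 0 < κ) (hκH : κ ≤ H) (hκ2 : κ ≤ 1 / 2) :
    ∀ᵐ ω ∂μ, upperLocOrd W ω ≤ ((2 / κ - 2 : ℝ) : EReal) := by
  obtain ⟨u, -, hu, hlim⟩ := exists_seq_strictMono_tendsto' hκ
  filter_upwards [ae_all_iff.2 fun k =>
    hμ.ae_exists_dyadicHolder_half_rpow ((hu k).2.trans_le hκH)] with ω hω
  refine ge_of_tendsto' (tendsto_coe_two_div_sub_two hκ.ne' hlim) fun k => ?_
  obtain ⟨N, hN⟩ := hω k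
  exact hW.upperLocOrd_le (hu k).1 ((hu k).2.trans_le hκ2) hN

lemma HasGaussianIncrements.ae_le_lowerLocOrd (hμ : HasGaussianIncrements H μ)
    (hW : IsWienerMeasure W) (hH : 0 < H) (hH1 : H < 1) :
    ∀ᵐ ω ∂μ, ((2 / H - 2 : ℝ) : EReal) ≤ lowerLocOrd W ω := by
  obtain ⟨u, -, hu, hlim⟩ := exists_seq_strictAnti_tendsto' hH1
  have hrough : ∀ᵐ ω ∂μ, ∀ k, DyadicRough ((1 / 2) ^ u k) ω := ae_all_iff.2 fun k =>
    hμ.ae_dyadicRough (by positivity)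
      (Real.rpow_lt_rpow_of_exponent_gt (by norm_num) (by norm_num) (hu k).1)
  filter_upwards [hrough, hμ.ae_eventually_measureReal_ball_pos hH hW] with ω hω hpos
  exact le_of_tendsto' (tendsto_coe_two_div_sub_two hH.ne' hlim) fun k =>
    hW.le_lowerLocOrd_of_dyadicRough (hH.trans (hu k).1) (hu k).2.le hpos (hω k)

theorem wiener_local_order_at_fbm_general (hH : 0 < H) (hW : IsWienerMeasure W)
    (hμ : HasGaussianIncrements H μ) : ∀ᵐ ω ∂μ,
      lowerLocOrd W ω = ((if H < 1 / 2 then 2 * (H⁻¹ - 1) else 2 : ℝ) : EReal) ∧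
      upperLocOrd W ω = ((if H < 1 / 2 then 2 * (H⁻¹ - 1) else 2 : ℝ) : EReal) := by
  suffices h : ∀ᵐ ω ∂μ,
      ((if H < 1 / 2 then 2 * (H⁻¹ - 1) else 2 : ℝ) : EReal) ≤ lowerLocOrd W ω ∧
      upperLocOrd W ω ≤ ((if H < 1 / 2 then 2 * (H⁻¹ - 1) else 2 : ℝ) : EReal) by
    filter_upwards [h] with ω ⟨hlower, hupper⟩
    have hle := lowerLocOrd_le_upperLocOrd (μ := W) (ω := ω)
    exact ⟨(hle.trans hupper).antisymm hlower, hupper.antisymm (hlower.trans hle)⟩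
  split_ifs with hH2
  · rw [show 2 * (H⁻¹ - 1) = 2 / H - 2 by ring]
    exact (hμ.ae_le_lowerLocOrd hW hH (by linarith)).and
      (hμ.ae_upperLocOrd_le hW hH le_rfl hH2.le)
  · have hupper := hμ.ae_upperLocOrd_le hW one_half_pos (not_lt.1 hH2) le_rfl
    rw [show (2 / (1 / 2) - 2 : ℝ) = 2 by norm_num] at hupper
    exact ((hμ.ae_eventually_measureReal_ball_pos hH hW).mono
      fun _ => hW.two_le_lowerLocOrd).and hupper

end GaussianIncrements

/-- For `W^H`-almost every path `ω̄`, the local order of the Wiener measure `W`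
at `ω̄` exists and equals `2(H⁻¹ - 1)` when `0 < H < 1/2`, and `2` when
`1/2 ≤ H < 1`. -/
theorem wiener_local_order_at_fbm (H : ℝ) (hH : H ∈ Set.Ioo (0:ℝ) 1)
    (W WH : Measure PathSpace) (hW : IsWienerMeasure W) (hWH : IsFBM H WH) :
    ∀ᵐ ωb ∂WH,
      lowerLocOrd W ωb = ((if H < 1/2 then 2 * (H⁻¹ - 1) else 2 : ℝ) : EReal) ∧
      upperLocOrd W ωb = ((if H < 1/2 then 2 * (H⁻¹ - 1) else 2 : ℝ) : EReal) :=
  wiener_local_order_at_fbm_general hH.1 hW (hWH.hasGaussianIncrements hH.1)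

end Multifractal
end
end

section
/- Let W be the Wiener measure on Ω and let ω̄ ∈ Ω. For every integer n ≥ 1 such that Q_n(ω̄) > 0 and for every ε > 0, one has −log W(C_n(ω̄, ε)) ≥ n²·Q_n(ω̄)²·(1/2 − 2ε/Q_n(ω̄)) − (n/2)·log(2nε²/π). -/
open scoped ENNReal NNReal Topology
open Filter MeasureTheory Metric Set

noncomputable section

namespace Multifractal


/-!
The increments of a Wiener path along the grid `0, 1/n, …, 1` are independent centered Gaussians
of variance `1/n`, and a path lies in the cylinder `C_n(ω̄, ε)` exactly when the partial sums of
its increments lie in a sup-norm ball of radius `ε`. Taking partial sums is a unipotent linear map,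
so the corresponding set of increment vectors has volume `(2ε)^n`. On that set each increment is
within `2ε` of the corresponding increment of `ω̄`; by Cauchy–Schwarz its sum of squares is at
least `n Q² - 4ε n Q`, where `Q = Q_n(ω̄)`, and the Gaussian density is therefore at most
`(n / 2π)^(n/2) exp (-n² (Q²/2 - 2εQ))`.
-/

open ProbabilityTheory
open Real (exp)
open scoped Real

section PiDensity

variable {ι : Type*} [Fintype ι]

lemma pi_withDensity_ofReal {α : ι → Type*} {mα : ∀ i, MeasurableSpace (α i)}
    {μ : ∀ i, Measure (α i)} [∀ i, SigmaFinite (μ i)] {f : ∀ i, α i → ℝ}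
    (hf : ∀ i, Integrable (f i) (μ i)) (hf_nonneg : ∀ i x, 0 ≤ f i x) :
    Measure.pi (fun i => (μ i).withDensity fun x => ENNReal.ofReal (f i x)) =
      (Measure.pi μ).withDensity fun x => ENNReal.ofReal (∏ i, f i (x i)) := by
  have := fun i => isFiniteMeasure_withDensity_ofReal (hf i).2
  refine Measure.pi_eq fun s hs => ?_
  rw [withDensity_apply _ (.univ_pi hs), Measure.restrict_pi_pi,
    ← ofReal_integral_eq_lintegral_ofReal (.fintype_prod_dep fun i => (hf i).restrict)
      (.of_forall fun x => Finset.prod_nonneg fun i _ => hf_nonneg i (x i)),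
    integral_fintype_prod_eq_prod,
    ENNReal.ofReal_prod_of_nonneg fun i _ => integral_nonneg (hf_nonneg i)]
  refine Finset.prod_congr rfl fun i _ => ?_
  rw [withDensity_apply _ (hs i),
    ofReal_integral_eq_lintegral_ofReal (hf i).restrict (.of_forall (hf_nonneg i))]

lemma pi_gaussianReal_eq_withDensity (m : ι → ℝ) {v : ι → ℝ≥0} (hv : ∀ i, v i ≠ 0) :
    Measure.pi (fun i => gaussianReal (m i) (v i)) =
      volume.withDensity fun x => ENNReal.ofReal (∏ i, gaussianPDFReal (m i) (v i) (x i)) := by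
  simp only [gaussianReal_of_var_ne_zero _ (hv _), gaussianPDF_def]
  exact pi_withDensity_ofReal (fun i => integrable_gaussianPDFReal (m i) (v i))
    fun i => gaussianPDFReal_nonneg (m i) (v i)

lemma prod_gaussianPDFReal_zero (v : ℝ≥0) (x : ι → ℝ) :
    ∏ i, gaussianPDFReal 0 v (x i) =
      (√(2 * π * v))⁻¹ ^ Fintype.card ι * exp (-(∑ i, x i ^ 2) / (2 * v)) := by
  simp only [gaussianPDFReal_def, sub_zero, Finset.prod_mul_distrib, Finset.prod_const,
    Finset.card_univ, ← Real.exp_sum, ← Finset.sum_div, Finset.sum_neg_distrib]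

lemma pi_gaussianReal_le_of_forall_le_sum_sq {v : ℝ≥0} (hv : v ≠ 0) {s : Set (ι → ℝ)} {r : ℝ}
    (hr : ∀ x ∈ s, r ≤ ∑ i, x i ^ 2) :
    Measure.pi (fun _ : ι => gaussianReal 0 v) s ≤
      ENNReal.ofReal ((√(2 * π * v))⁻¹ ^ Fintype.card ι * exp (-r / (2 * v))) * volume s := by
  rw [pi_gaussianReal_eq_withDensity _ fun _ => hv, withDensity_apply', ← setLIntegral_const]
  refine setLIntegral_mono measurable_const fun x hx => ?_
  rw [prod_gaussianPDFReal_zero]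
  gcongr
  exact hr x hx

lemma isOpenPosMeasure_gaussianReal (m : ℝ) {v : ℝ≥0} (hv : v ≠ 0) :
    (gaussianReal m v).IsOpenPosMeasure :=
  (gaussianReal_absolutelyContinuous' m hv).isOpenPosMeasure

end PiDensity

section CumSum

variable {ι : Type*} [LinearOrder ι] [LocallyFiniteOrderBot ι]

/-- The cumulative-sum operator `(x i)ᵢ ↦ (∑ i ≤ j, x i)ⱼ`, which recovers the values of a path
from its increments. -/
def cumSum : (ι → ℝ) →ₗ[ℝ] ι → ℝ where
  toFun x j := ∑ i ∈ Finset.Iic j, x i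
  map_add' _ _ := funext fun _ => Finset.sum_add_distrib
  map_smul' _ _ := funext fun _ => (Finset.mul_sum _ _ _).symm

lemma cumSum_apply (x : ι → ℝ) (j : ι) : cumSum x j = ∑ i ∈ Finset.Iic j, x i := rfl

lemma continuous_cumSum [Finite ι] : Continuous (cumSum : (ι → ℝ) →ₗ[ℝ] ι → ℝ) :=
  LinearMap.continuous_on_pi _

lemma det_cumSum [Finite ι] : LinearMap.det (cumSum : (ι → ℝ) →ₗ[ℝ] ι → ℝ) = 1 := by
  have := Fintype.ofFinite ι
  have hentry (j i : ι) : LinearMap.toMatrix' cumSum j i = if i ≤ j then (1 : ℝ) else 0 := by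
    simp [LinearMap.toMatrix'_apply, cumSum_apply, Pi.single_apply]
  rw [← LinearMap.det_toMatrix', Matrix.det_of_isLowerTriangular]
  · simp [hentry]
  · intro j i hij
    rw [hentry, if_neg (not_le.2 (OrderDual.toDual_lt_toDual.1 hij))]

variable [Fintype ι]

lemma measurePreserving_cumSum :
    MeasurePreserving (cumSum : (ι → ℝ) →ₗ[ℝ] ι → ℝ) volume volume where
  measurable := continuous_cumSum.measurable
  map_eq := by simp [Real.map_linearMap_volume_pi_eq_smul_volume_pi, det_cumSum]

lemma volume_preimage_cumSum_closedBall (b : ι → ℝ) {ε : ℝ} (hε : 0 ≤ ε) :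
    volume (cumSum ⁻¹' closedBall b ε) = ENNReal.ofReal ((2 * ε) ^ Fintype.card ι) := by
  rw [measurePreserving_cumSum.measure_preimage measurableSet_closedBall.nullMeasurableSet,
    Real.volume_pi_closedBall _ hε]

lemma norm_le_two_mul_norm_cumSum [PredOrder ι] (x : ι → ℝ) : ‖x‖ ≤ 2 * ‖cumSum x‖ := by
  refine (pi_norm_le_iff_of_nonneg (by positivity)).2 fun i => ?_
  have hIio : ‖∑ k ∈ Finset.Iio i, x k‖ ≤ ‖cumSum x‖ := by
    by_cases hi : IsMin i
    · simp [Finset.Iio_eq_empty.2 hi]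
    · rw [← Finset.Iic_pred_eq_Iio_of_not_isMin hi]
      exact norm_le_pi_norm (cumSum x) (Order.pred i)
  have hsplit : x i = cumSum x i - ∑ k ∈ Finset.Iio i, x k := by
    rw [cumSum_apply, ← Finset.Iio_insert, Finset.sum_insert Finset.notMem_Iio_self,
      add_sub_cancel_right]
  calc ‖x i‖ ≤ ‖cumSum x i‖ + ‖∑ k ∈ Finset.Iio i, x k‖ := hsplit ▸ norm_sub_le _ _
    _ ≤ 2 * ‖cumSum x‖ := by linarith [norm_le_pi_norm (cumSum x) i]

end CumSum

section GaussianTube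

lemma sum_sq_sub_le_sum_sq {ι : Type*} [Fintype ι] (a x : ι → ℝ) :
    ∑ i, a i ^ 2 - 2 * ‖x - a‖ * √(Fintype.card ι * ∑ i, a i ^ 2) ≤ ∑ i, x i ^ 2 := by
  have hpt (i : ι) : a i ^ 2 - 2 * ‖x - a‖ * |a i| ≤ x i ^ 2 := by
    have hcross : |a i * (x i - a i)| ≤ |a i| * ‖x - a‖ := by
      rw [abs_mul]
      exact mul_le_mul_of_nonneg_left (norm_le_pi_norm (x - a) i) (abs_nonneg _)
    nlinarith [neg_abs_le (a i * (x i - a i)), sq_nonneg (x i - a i)]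
  have hl1 : ∑ i, |a i| ≤ √(Fintype.card ι * ∑ i, a i ^ 2) := by
    refine Real.le_sqrt_of_sq_le ?_
    simpa using sq_sum_le_card_mul_sum_sq (s := Finset.univ) (f := fun i => |a i|)
  calc ∑ i, a i ^ 2 - 2 * ‖x - a‖ * √(Fintype.card ι * ∑ i, a i ^ 2)
      ≤ ∑ i, a i ^ 2 - 2 * ‖x - a‖ * ∑ i, |a i| := by gcongr
    _ = ∑ i, (a i ^ 2 - 2 * ‖x - a‖ * |a i|) := by rw [Finset.sum_sub_distrib, Finset.mul_sum]
    _ ≤ ∑ i, x i ^ 2 := Finset.sum_le_sum fun i _ => hpt i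

variable {ι : Type*} [Fintype ι] [LinearOrder ι] [LocallyFiniteOrderBot ι]

lemma pi_gaussianReal_preimage_cumSum_closedBall_pos {v : ℝ≥0} (hv : v ≠ 0) (a : ι → ℝ) {ε : ℝ}
    (hε : 0 < ε) :
    0 < Measure.pi (fun _ : ι => gaussianReal 0 v) (cumSum ⁻¹' closedBall (cumSum a) ε) := by
  have := isOpenPosMeasure_gaussianReal 0 hv
  exact Measure.measure_pos_of_mem_nhds _
    (continuous_cumSum.continuousAt.preimage_mem_nhds (closedBall_mem_nhds (cumSum a) hε))

lemma pi_gaussianReal_preimage_cumSum_closedBall_le [PredOrder ι] {v : ℝ≥0} (hv : v ≠ 0)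
    (a : ι → ℝ) {ε : ℝ} (hε : 0 ≤ ε) :
    Measure.pi (fun _ : ι => gaussianReal 0 v) (cumSum ⁻¹' closedBall (cumSum a) ε) ≤
      ENNReal.ofReal (√(2 * ε ^ 2 / (π * v)) ^ Fintype.card ι *
        exp (-(∑ i, a i ^ 2 - 4 * ε * √(Fintype.card ι * ∑ i, a i ^ 2)) / (2 * v))) := by
  have hnear (x : ι → ℝ) (hx : x ∈ cumSum ⁻¹' closedBall (cumSum a) ε) : ‖x - a‖ ≤ 2 * ε := by
    rw [mem_preimage, mem_closedBall_iff_norm, ← map_sub] at hx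
    exact (norm_le_two_mul_norm_cumSum _).trans (by gcongr)
  have hsq (x : ι → ℝ) (hx : x ∈ cumSum ⁻¹' closedBall (cumSum a) ε) :
      ∑ i, a i ^ 2 - 4 * ε * √(Fintype.card ι * ∑ i, a i ^ 2) ≤ ∑ i, x i ^ 2 := by
    refine le_trans ?_ (sum_sq_sub_le_sum_sq a x)
    gcongr ?_ - ?_ * ?_
    linarith [hnear x hx]
  have hconst : (√(2 * π * v))⁻¹ * (2 * ε) = √(2 * ε ^ 2 / (π * v)) := by
    have hv' : (v : ℝ) ≠ 0 := NNReal.coe_ne_zero.2 hv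
    rw [← Real.sqrt_inv, ← Real.sqrt_sq (by positivity : 0 ≤ 2 * ε),
      ← Real.sqrt_mul (by positivity)]
    congr 1
    field_simp
  refine (pi_gaussianReal_le_of_forall_le_sum_sq hv hsq).trans_eq ?_
  rw [volume_preimage_cumSum_closedBall _ hε, ← ENNReal.ofReal_mul (by positivity),
    mul_right_comm, ← mul_pow, hconst]

end GaussianTube

section Increments

variable {n : ℕ}

/-- The increments of a path along the points `t 0, …, t n`. -/
def increments (t : Fin (n + 1) → unitInterval) (ω : PathSpace) (i : Fin n) : ℝ :=
  ω.1 (t i.succ) - ω.1 (t i.castSucc)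

lemma measurable_increments (t : Fin (n + 1) → unitInterval) : Measurable (increments t) :=
  have hcont (s : unitInterval) : Continuous fun ω : PathSpace => ω.1 s :=
    (continuous_eval_const s).comp continuous_subtype_val
  (continuous_pi fun _ => (hcont _).sub (hcont _)).measurable

lemma cumSum_increments (t : Fin (n + 1) → unitInterval) (ω : PathSpace) (j : Fin n) :
    cumSum (increments t ω) j = ω.1 (t j.succ) - ω.1 (t 0) :=
  Fin.sum_Iic_sub j fun i => ω.1 (t i)

lemma IsGaussianProcess.map_sum_mul_increments {μ : Measure PathSpace}
    {K : unitInterval → unitInterval → ℝ} (hμ : IsGaussianProcess μ K)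
    (t : Fin (n + 1) → unitInterval) (c : Fin n → ℝ) :
    μ.map (fun ω => ∑ i, c i * increments t ω i) =
      gaussianReal 0 (Real.toNNReal (∑ i, ∑ j, c i * c j *
        (K (t i.succ) (t j.succ) - K (t i.succ) (t j.castSucc)
          - K (t i.castSucc) (t j.succ) + K (t i.castSucc) (t j.castSucc)))) := by
  -- An increment is a difference of two coordinates, so double the index set, with signs.
  have h := hμ.2 (n + n) (Fin.append (fun i => t i.succ) fun i => t i.castSucc) (Fin.append c (-c))
  simp only [Fin.sum_univ_add, Fin.append_left, Fin.append_right, Pi.neg_apply,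
    ← Finset.sum_add_distrib] at h
  convert h using 6 with ω i
  · rw [increments]
    ring
  · ring

lemma mixed_difference_min_of_monotone {α : Type*} [AddCommGroup α] [LinearOrder α]
    {f : Fin (n + 1) → α} (hf : Monotone f) (i j : Fin n) :
    min (f i.succ) (f j.succ) - min (f i.succ) (f j.castSucc) - min (f i.castSucc) (f j.succ)
      + min (f i.castSucc) (f j.castSucc) = if i = j then f i.succ - f i.castSucc else 0 := by
  simp only [← hf.map_min]
  rcases lt_trichotomy i j with hij | rfl | hij
  · have hle : i.succ ≤ j.castSucc := hij
    simp [hij.ne, hij.le, hle, hle.trans j.castSucc_le_succ,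
      (i.castSucc_le_succ.trans hle).trans j.castSucc_le_succ]
  · simp [min_eq_left i.castSucc_le_succ, min_eq_right i.castSucc_le_succ]
  · have hle : j.succ ≤ i.castSucc := hij
    simp [hij.ne', hij.le, hle, hle.trans i.castSucc_le_succ,
      (j.castSucc_le_succ.trans hle).trans i.castSucc_le_succ]

lemma map_eq_pi_gaussianReal_of_map_sum_mul {Ω ι : Type*} {mΩ : MeasurableSpace Ω} {μ : Measure Ω}
    [Fintype ι] [IsFiniteMeasure μ] {X : Ω → ι → ℝ} (hX : Measurable X) (v : ι → ℝ≥0)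
    (h : ∀ c : ι → ℝ, μ.map (fun ω => ∑ i, c i * X ω i) =
      gaussianReal 0 (Real.toNNReal (∑ i, c i ^ 2 * v i))) :
    μ.map X = Measure.pi fun i => gaussianReal 0 (v i) := by
  refine charFun_eq_pi_iff.1 fun t => ?_
  have hlin : charFun ((μ.map X).map (WithLp.toLp 2)) t =
      charFun (μ.map fun ω => ∑ i, t i * X ω i) 1 := by
    rw [charFun_apply_real, charFun_apply, ← MeasurableEquiv.coe_toLp, integral_map_equiv,
      integral_map hX.aemeasurable (by fun_prop), integral_map (by fun_prop) (by fun_prop)]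
    simp [PiLp.inner_apply]
  rw [hlin, h]
  simp only [charFun_gaussianReal]
  rw [← Complex.exp_sum, Real.coe_toNNReal _ (by positivity)]
  congr 1
  simp [Finset.sum_div, mul_comm]

lemma IsWienerMeasure.map_increments {W : Measure PathSpace} (hW : IsWienerMeasure W)
    {t : Fin (n + 1) → unitInterval} (ht : Monotone t) :
    W.map (increments t) = Measure.pi fun i =>
      gaussianReal 0 (Real.toNNReal (t i.succ - t i.castSucc)) := by
  have := hW.1
  refine map_eq_pi_gaussianReal_of_map_sum_mul (measurable_increments t) _ fun c => ?_
  have htR : Monotone fun i => (t i : ℝ) := ht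
  have hstep (i : Fin n) : (0 : ℝ) ≤ t i.succ - t i.castSucc :=
    sub_nonneg.2 (htR i.castSucc_le_succ)
  rw [hW.map_sum_mul_increments]
  simp [mixed_difference_min_of_monotone htR, Real.coe_toNNReal _ (hstep _), sq]

end Increments

section Grid

/-- The uniform grid `0, 1/n, …, 1` of the unit interval. -/
def grid (n : ℕ) (j : Fin (n + 1)) : unitInterval := gridPt n j

lemma coe_grid (n : ℕ) (j : Fin (n + 1)) : (grid n j : ℝ) = j / n := by
  have hj : (j : ℝ) / n ≤ 1 := div_le_one_of_le₀ (by exact_mod_cast j.is_le) n.cast_nonneg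
  have hj' : (0 : ℝ) ≤ j / n := by positivity
  simp [grid, gridPt, clampI, hj, hj']

lemma monotone_grid (n : ℕ) : Monotone (grid n) := fun i j hij => by
  rw [← Subtype.coe_le_coe, coe_grid, coe_grid]
  gcongr
  exact hij

lemma grid_zero (n : ℕ) : grid n 0 = 0 := Subtype.ext (by simp [coe_grid])

lemma sum_increments_grid_sq {n : ℕ} (hn : n ≠ 0) (ω : PathSpace) :
    ∑ i, increments (grid n) ω i ^ 2 = n * Qvar ω n ^ 2 := by
  have hn' : (n : ℝ) ≠ 0 := Nat.cast_ne_zero.2 hn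
  rw [Qvar, Real.sq_sqrt (by positivity), one_div, mul_inv_cancel_left₀ hn']
  exact Fin.sum_univ_eq_sum_range
    (fun i => (ω.1 (gridPt n (i + 1)) - ω.1 (gridPt n i)) ^ 2) n

lemma cylinder_eq_preimage (ωb : PathSpace) (n : ℕ) {ε : ℝ} (hε : 0 ≤ ε) :
    cylinder ωb n ε = increments (grid n) ⁻¹'
      (cumSum ⁻¹' closedBall (cumSum (increments (grid n) ωb)) ε) := by
  have hcumSum (ω : PathSpace) (j : Fin n) :
      cumSum (increments (grid n) ω) j = ω.1 (gridPt n (j + 1)) := by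
    rw [cumSum_increments, grid_zero, ω.2, sub_zero]
    rfl
  ext ω
  simp only [mem_preimage, mem_closedBall, dist_pi_le_iff hε, hcumSum, Real.dist_eq]
  refine ⟨fun h j => h _ (Finset.mem_Icc.2 ⟨j.1.succ_pos, j.2⟩), fun h j hj => ?_⟩
  obtain ⟨hj1, hjn⟩ := Finset.mem_Icc.1 hj
  obtain ⟨k, rfl⟩ := Nat.exists_eq_add_of_le' hj1
  exact h ⟨k, hjn⟩

namespace IsWienerMeasure

variable {W : Measure PathSpace} (hW : IsWienerMeasure W) (ωb : PathSpace) {n : ℕ} {ε : ℝ}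
include hW

lemma map_increments_grid (n : ℕ) :
    W.map (increments (grid n)) = Measure.pi fun _ => gaussianReal 0 (n : ℝ≥0)⁻¹ := by
  rw [hW.map_increments (monotone_grid n)]
  congr! with i
  rw [coe_grid, coe_grid, ← sub_div, Fin.val_succ, Fin.val_castSucc]
  simp [Real.toNNReal_inv]

lemma measure_cylinder (n : ℕ) (hε : 0 ≤ ε) :
    W (cylinder ωb n ε) = Measure.pi (fun _ => gaussianReal 0 (n : ℝ≥0)⁻¹)
      (cumSum ⁻¹' closedBall (cumSum (increments (grid n) ωb)) ε) := by
  rw [cylinder_eq_preimage ωb n hε, ← hW.map_increments_grid, Measure.map_apply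
    (measurable_increments _) (continuous_cumSum.measurable measurableSet_closedBall)]

lemma measure_cylinder_pos (hn : n ≠ 0) (hε : 0 < ε) : 0 < W (cylinder ωb n ε) := by
  rw [hW.measure_cylinder ωb n hε.le]
  exact pi_gaussianReal_preimage_cumSum_closedBall_pos
    (inv_ne_zero (Nat.cast_ne_zero.2 hn)) _ hε

lemma measure_cylinder_le (hn : n ≠ 0) (hε : 0 ≤ ε) :
    W (cylinder ωb n ε) ≤ ENNReal.ofReal (√(2 * n * ε ^ 2 / π) ^ n *
      exp (-(n ^ 2 * (Qvar ωb n ^ 2 / 2 - 2 * ε * Qvar ωb n)))) := by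
  have hn' : (n : ℝ) ≠ 0 := Nat.cast_ne_zero.2 hn
  have hQ : 0 ≤ Qvar ωb n := Real.sqrt_nonneg _
  have hroot : √(n * (n * Qvar ωb n ^ 2)) = n * Qvar ωb n := by
    rw [← mul_assoc, ← sq, ← mul_pow, Real.sqrt_sq (by positivity)]
  rw [hW.measure_cylinder ωb n hε]
  refine (pi_gaussianReal_preimage_cumSum_closedBall_le
    (inv_ne_zero (Nat.cast_ne_zero.2 hn)) _ hε).trans_eq ?_
  rw [Fintype.card_fin, sum_increments_grid_sq hn, hroot, NNReal.coe_inv, NNReal.coe_natCast]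
  congr 4 <;> field_simp
  ring

end IsWienerMeasure

end Grid

/-- Upper bound of cylinder measures via the discrete quadratic variation:
`-log W(C_n(ω̄,ε)) ≥ n²Q_n(ω̄)²(1/2 - 2ε/Q_n(ω̄)) - (n/2)·log(2nε²/π)`. -/
theorem cylinder_measure_upper (W : Measure PathSpace) (hW : IsWienerMeasure W)
    (ωb : PathSpace) (n : ℕ) (hn : 1 ≤ n) (hQ : 0 < Qvar ωb n) (ε : ℝ) (hε : 0 < ε) :
    (n:ℝ)^2 * Qvar ωb n ^ 2 * (1/2 - 2 * ε / Qvar ωb n)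
        - ((n:ℝ)/2) * Real.log (2 * (n:ℝ) * ε^2 / Real.pi)
      ≤ -Real.log ((W (cylinder ωb n ε)).toReal) := by
  have hn' : n ≠ 0 := Nat.one_le_iff_ne_zero.1 hn
  set Q := Qvar ωb n
  have hpos := hW.measure_cylinder_pos ωb hn' hε
  have hle := hW.measure_cylinder_le ωb hn' hε.le
  calc (n : ℝ) ^ 2 * Q ^ 2 * (1 / 2 - 2 * ε / Q) - n / 2 * Real.log (2 * n * ε ^ 2 / π)
      = -Real.log (√(2 * n * ε ^ 2 / π) ^ n * exp (-(n ^ 2 * (Q ^ 2 / 2 - 2 * ε * Q)))) := by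
        rw [Real.log_mul (by positivity) (by positivity), Real.log_pow,
          Real.log_sqrt (by positivity), Real.log_exp]
        field_simp
        ring
    _ ≤ -Real.log (W (cylinder ωb n ε)).toReal := by
        have hfin : W (cylinder ωb n ε) ≠ ⊤ := ne_top_of_le_ne_top ENNReal.ofReal_ne_top hle
        gcongr
        · exact ENNReal.toReal_pos hpos.ne' hfin
        · exact ENNReal.toReal_le_of_le_ofReal (by positivity) hle

end Multifractal
end
end
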